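/- arXiv:2408.03051 — 4 statements merged into one kernel-verified Lean document; each statement's English description precedes it below -/
import Mathlib

section
/- Let $p\ge 2$ be an integer, $\beta_1,\dots,\beta_p\in(0,1)$ with $\sum_{i=1}^{p}\beta_i<p-1$, and let $g_1,\dots,g_p:\mathbb{Z}\to\mathbb{R}$ be bounded functions such that for each $i$ there exist $\ell_i^{+},\ell_i^{-}\in\mathbb{R}$ with $\lim_{k\to+\infty}k^{\beta_i}g_i(k)=\ell_i^{+}$ and $\lim_{k\to+\infty}k^{\beta_i}g_i(-k)=\ell_i^{-}$. Define $h_i:\mathbb{R}\setminus\{0\}\to\mathbb{R}$ by $h_i(t)=\ell_i^{+}t^{-\beta_i}$ for $t>0$ and $h_i(t)=\ell_i^{-}(-t)^{-\beta_i}$ for $t<0$. Then, with the cyclic convention $k_{p+1}:=k_1$ and $x_{p+1}:=x_1$, $\lim_{n\to\infty}\;n^{\sum_{i=1}^{p}\beta_i-p}\sum_{k_1,\dots,k_p=1}^{n}\prod_{i=1}^{p}g_i(k_{i+1}-k_i)=\int_{[0,1]^{p}}\prod_{i=1}^{p}h_i(x_{i+1}-x_i)\,dx_1\cdots dx_p$,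 the integral on the right being finite. -/
open MeasureTheory Filter Asymptotics Topology Real

/-! The rescaled sum is the integral over `(0, 1] ^ p` of the step function
`∏ i, n ^ β i * g i (⌈n x (i + 1)⌉ - ⌈n x i⌉)`, which converges to the product of the kernels off
the null set where two cyclic neighbours coincide, and which is dominated by a constant times
`∏ i, |x (i + 1) - x i| ^ (-(β i)⁺)`.

That product is integrable as soon as `β i < 1` and `∑ i, β i < p - 1`: the increments sum to zero,
so only `p - 1` of them are independent, and the room left by the second condition is a choice of
weights `0 < w i < 1 - β i` with sum `1`. Weighted AM-GM bounds the product by a combination of `p`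
products, each missing one factor and having exponents `β i / (1 - w i) < 1` for the others; in the
increment coordinates each of these is a product of integrable functions of one variable. Passing
from `β` to `β⁺` preserves both conditions: if some `β j ≤ 0`, then the sum of the `(β i)⁺` involves
only `p - 1` terms, each less than `1`. -/

section WeightedGeometricMean

variable {ι : Type*} [Fintype ι]

lemma exists_pos_lt_sum_eq_one {c : ι → ℝ} (hc : ∀ i, 0 < c i) (hsum : 1 < ∑ i, c i) :
    ∃ w : ι → ℝ, (∀ i, 0 < w i) ∧ (∀ i, w i < c i) ∧ ∑ i, w i = 1 := by
  have hpos : 0 < ∑ i, c i := zero_lt_one.trans hsum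
  refine ⟨fun i ↦ c i / ∑ k, c k, fun i ↦ div_pos (hc i) hpos, fun i ↦ div_lt_self (hc i) hsum, ?_⟩
  rw [← Finset.sum_div, div_self hpos.ne']

lemma prod_rpow_one_sub_le_sum_mul_prod_erase [DecidableEq ι] {w b : ι → ℝ} (hw : ∀ i, 0 ≤ w i)
    (hw_sum : ∑ i, w i = 1) (hb : ∀ i, 0 ≤ b i) :
    ∏ i, b i ^ (1 - w i) ≤ ∑ j, w j * ∏ i ∈ Finset.univ.erase j, b i := by
  calc ∏ i, b i ^ (1 - w i)
      = ∏ i, ∏ j ∈ Finset.univ.erase i, b i ^ w j := by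
        refine Finset.prod_congr rfl fun i _ ↦ ?_
        rw [← hw_sum, ← Finset.sum_erase_eq_sub (Finset.mem_univ i),
          rpow_sum_of_nonneg (hb i) fun j _ ↦ hw j]
    _ = ∏ j, ∏ i ∈ Finset.univ.erase j, b i ^ w j :=
        Finset.prod_comm' fun i j ↦ by simp [ne_comm]
    _ = ∏ j, (∏ i ∈ Finset.univ.erase j, b i) ^ w j :=
        Finset.prod_congr rfl fun j _ ↦ finsetProd_rpow _ _ (fun i _ ↦ hb i) _
    _ ≤ ∑ j, w j * ∏ i ∈ Finset.univ.erase j, b i :=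
        geom_mean_le_arith_mean_weighted _ _ _ (fun i _ ↦ hw i) hw_sum
          fun j _ ↦ Finset.prod_nonneg fun i _ ↦ hb i

end WeightedGeometricMean

section IncrementMap

variable {ι : Type*} {σ : Equiv.Perm ι}

lemma eq_of_isCycleOn_univ {α : Type*} {x : ι → α} (hσ : σ.IsCycleOn Set.univ)
    (hx : ∀ i, x (σ i) = x i) (i j : ι) : x i = x j := by
  obtain ⟨n, rfl⟩ := hσ.2 (Set.mem_univ i) (Set.mem_univ j)
  induction n with
  | zero => rfl
  | succ n ih => rw [add_comm, zpow_one_add, Equiv.Perm.mul_apply, hx, ih]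
  | pred n ih =>
    rw [ih, ← hx ((σ ^ (-(n : ℤ) - 1)) i), ← Equiv.Perm.mul_apply, ← zpow_one_add, add_sub_cancel]

variable [DecidableEq ι]

/-- The linear change of variables `x ↦ (x (σ i) - x i)ᵢ`, except that its `j`-th component is
`x j`: the increments along a cycle sum to zero, so one of them has to be traded for a coordinate to
make the map invertible. -/
def incrementMap (σ : Equiv.Perm ι) (j : ι) : (ι → ℝ) →ₗ[ℝ] (ι → ℝ) :=
  LinearMap.pi fun i ↦ if i = j then .proj (R := ℝ) (φ := fun _ ↦ ℝ) j else .proj (σ i) - .proj i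

lemma incrementMap_apply_self (σ : Equiv.Perm ι) (j : ι) (x : ι → ℝ) :
    incrementMap σ j x j = x j := by
  simp [incrementMap]

lemma incrementMap_apply_of_ne {i j : ι} (hij : i ≠ j) (x : ι → ℝ) :
    incrementMap σ j x i = x (σ i) - x i := by
  simp [incrementMap, hij]

lemma incrementMap_injective [Finite ι] (hσ : σ.IsCycleOn Set.univ) (j : ι) :
    Function.Injective (incrementMap σ j) := by
  have := Fintype.ofFinite ι
  refine (injective_iff_map_eq_zero _).2 fun x hx ↦ ?_
  have hxj : x j = 0 := by rw [← incrementMap_apply_self σ j x, hx, Pi.zero_apply]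
  have hne : ∀ i ≠ j, x (σ i) - x i = 0 := fun i hi ↦ by
    rw [← incrementMap_apply_of_ne hi, hx, Pi.zero_apply]
  have hself : x (σ j) - x j = 0 := by
    rw [← Fintype.sum_eq_single j hne, Finset.sum_sub_distrib, Equiv.sum_comp σ x, sub_self]
  have hall (i : ι) : x (σ i) = x i := by
    obtain rfl | hi := eq_or_ne i j
    exacts [sub_eq_zero.1 hself, sub_eq_zero.1 (hne i hi)]
  exact funext fun i ↦ (eq_of_isCycleOn_univ hσ hall i j).trans hxj

end IncrementMap

section IntegrableIncrements

lemma integrableOn_comp_linearMap {E F : Type*} [NormedAddCommGroup E] [NormedSpace ℝ E]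
    [FiniteDimensional ℝ E] [MeasurableSpace E] [BorelSpace E] [NormedAddCommGroup F]
    {μ : Measure E} [μ.IsAddHaarMeasure] {T : E →ₗ[ℝ] E} (hT : Function.Injective T) {f : E → F}
    {s : Set E} (hf : IntegrableOn f s μ) : IntegrableOn (f ∘ T) (T ⁻¹' s) μ := by
  have hdet : LinearMap.det T ≠ 0 :=
    ((LinearMap.isUnit_iff_ker_eq_bot T).2 (LinearMap.ker_eq_bot.2 hT)).map LinearMap.det |>.ne_zero
  have hemb : MeasurableEmbedding T :=
    (LinearMap.isClosedEmbedding_of_injective (LinearMap.ker_eq_bot.2 hT)).measurableEmbedding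
  rw [← hemb.integrableOn_map_iff, Measure.map_linearMap_addHaar_eq_smul_addHaar μ hdet,
    IntegrableOn, Measure.restrict_smul]
  exact hf.smul_measure ENNReal.ofReal_ne_top

lemma integrableOn_Icc_abs_rpow {r : ℝ} (hr : -1 < r) (a b : ℝ) :
    IntegrableOn (fun t : ℝ ↦ |t| ^ r) (Set.Icc a b) := by
  have hpos (x : ℝ) (hx : 0 < x) : IntervalIntegrable (fun t : ℝ ↦ |t| ^ r) volume 0 x := by
    refine (intervalIntegral.intervalIntegrable_rpow' hr).congr fun t ht ↦ ?_
    rw [Set.uIoc_of_le hx.le] at ht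
    simp only [abs_of_pos ht.1]
  have heven : IntervalIntegrable (fun t : ℝ ↦ |t| ^ r) volume a b :=
    intervalIntegrable_of_even (fun t ↦ by rw [abs_neg]) hpos
  rw [intervalIntegrable_iff'] at heven
  exact heven.mono_set Set.Icc_subset_uIcc

variable {ι : Type*} [Fintype ι] {σ : Equiv.Perm ι}

lemma integrableOn_univ_pi_prod_abs_rpow {γ : ι → ℝ} (hγ : ∀ i, γ i < 1) (a b : ℝ) :
    IntegrableOn (fun y : ι → ℝ ↦ ∏ i, |y i| ^ (-γ i)) (Set.univ.pi fun _ ↦ Set.Icc a b) := by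
  rw [IntegrableOn, volume_pi, Measure.restrict_pi_pi]
  exact Integrable.fintype_prod (f := fun i t ↦ |t| ^ (-γ i))
    fun i ↦ integrableOn_Icc_abs_rpow (neg_lt_neg (hγ i)) a b

lemma integrableOn_prod_erase_abs_increment_rpow [DecidableEq ι] (hσ : σ.IsCycleOn Set.univ) (j : ι)
    {γ : ι → ℝ} (hγ : ∀ i, γ i < 1) :
    IntegrableOn (fun x : ι → ℝ ↦ ∏ i ∈ Finset.univ.erase j, |x (σ i) - x i| ^ (-γ i))
      (Set.univ.pi fun _ ↦ Set.Icc 0 1) := by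
  have hγ' (i : ι) : Function.update γ j 0 i < 1 := by
    obtain rfl | hij := eq_or_ne i j
    · simp
    · simpa [hij] using hγ i
  have hcube : (Set.univ.pi fun _ ↦ Set.Icc 0 1) ⊆
      incrementMap σ j ⁻¹' Set.univ.pi fun _ ↦ Set.Icc (-1) 1 := by
    intro x hx i _
    have hx (k : ι) : 0 ≤ x k ∧ x k ≤ 1 := hx k trivial
    obtain rfl | hij := eq_or_ne i j
    · rw [incrementMap_apply_self]
      constructor <;> linarith [hx i]
    · rw [incrementMap_apply_of_ne hij]
      constructor <;> linarith [hx i, hx (σ i)]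
  refine ((integrableOn_comp_linearMap (incrementMap_injective hσ j)
    (integrableOn_univ_pi_prod_abs_rpow hγ' (-1) 1)).mono_set hcube).congr_fun (fun x _ ↦ ?_)
    (MeasurableSet.univ_pi fun _ ↦ measurableSet_Icc)
  rw [Function.comp_apply, ← Finset.mul_prod_erase _ _ (Finset.mem_univ j), Function.update_self,
    neg_zero, rpow_zero, one_mul]
  refine Finset.prod_congr rfl fun i hi ↦ ?_
  have hij := Finset.ne_of_mem_erase hi
  rw [incrementMap_apply_of_ne hij, Function.update_of_ne hij]

variable [Nontrivial ι] {β : ι → ℝ}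

lemma integrableOn_prod_abs_increment_rpow (hσ : σ.IsCycleOn Set.univ) (hβ : ∀ i, β i < 1)
    (hsum : ∑ i, β i < Fintype.card ι - 1) :
    IntegrableOn (fun x : ι → ℝ ↦ ∏ i, |x (σ i) - x i| ^ (-β i))
      (Set.univ.pi fun _ ↦ Set.Icc 0 1) := by
  classical
  obtain ⟨w, hw_pos, hw_lt, hw_sum⟩ : ∃ w : ι → ℝ,
      (∀ i, 0 < w i) ∧ (∀ i, w i < 1 - β i) ∧ ∑ i, w i = 1 := by
    refine exists_pos_lt_sum_eq_one (fun i ↦ sub_pos.2 (hβ i)) ?_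
    rw [Finset.sum_sub_distrib, Finset.sum_const, nsmul_one, Finset.card_univ]
    linarith
  have hw_one (i : ι) : 0 < 1 - w i := by
    obtain ⟨j, hji⟩ := exists_ne i
    rw [sub_pos, ← hw_sum]
    exact Finset.single_lt_sum hji (Finset.mem_univ i) (Finset.mem_univ j) (hw_pos j)
      fun k _ _ ↦ (hw_pos k).le
  have hγ (i : ι) : β i / (1 - w i) < 1 := by
    rw [div_lt_one (hw_one i)]
    linarith [hw_lt i]
  have hdom := integrable_finsetSum Finset.univ fun j _ ↦
    (integrableOn_prod_erase_abs_increment_rpow hσ j hγ).const_mul (w j)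
  refine hdom.mono' (Measurable.aestronglyMeasurable (by fun_prop)) (.of_forall fun x ↦ ?_)
  rw [norm_of_nonneg (Finset.prod_nonneg fun i _ ↦ rpow_nonneg (abs_nonneg _) _)]
  convert prod_rpow_one_sub_le_sum_mul_prod_erase (fun i ↦ (hw_pos i).le) hw_sum
    (fun i ↦ rpow_nonneg (abs_nonneg (x (σ i) - x i)) (-(β i / (1 - w i)))) using 2 with i
  rw [← rpow_mul (abs_nonneg _), neg_mul, div_mul_cancel₀ _ (hw_one i).ne']

lemma sum_posPart_lt_card_sub_one (hβ : ∀ i, β i < 1) (hsum : ∑ i, β i < Fintype.card ι - 1) :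
    ∑ i, (β i)⁺ < Fintype.card ι - 1 := by
  classical
  by_cases! hnonneg : ∀ i, 0 ≤ β i
  · simpa only [posPart_of_nonneg (hnonneg _)] using hsum
  · obtain ⟨j, hj⟩ := hnonneg
    obtain ⟨k, hkj⟩ := exists_ne j
    calc ∑ i, (β i)⁺ = ∑ i ∈ Finset.univ.erase j, (β i)⁺ := by
          rw [← Finset.add_sum_erase _ _ (Finset.mem_univ j), posPart_of_nonpos hj.le, zero_add]
      _ < ∑ i ∈ Finset.univ.erase j, 1 :=
          Finset.sum_lt_sum_of_nonempty ⟨k, by simpa using hkj⟩ fun i _ ↦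
            max_lt (hβ i) one_pos
      _ = Fintype.card ι - 1 := by
          rw [Finset.sum_const, Finset.card_erase_of_mem (Finset.mem_univ j), nsmul_one,
            Finset.card_univ, Nat.cast_pred Fintype.card_pos]

end IntegrableIncrements

section PowerKernel

/-- The kernel `h` of the limiting integral: a two-sided power function with exponent `-β` and
coefficients `a` on the positive and `b` on the negative half-line. The value at `0` is immaterial;
the negative branch is chosen. -/
noncomputable def powerKernel (β a b t : ℝ) : ℝ :=
  if 0 < t then a * t ^ (-β) else b * (-t) ^ (-β)

variable {β a b t : ℝ}

lemma powerKernel_of_pos (ht : 0 < t) : powerKernel β a b t = a * t ^ (-β) :=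
  if_pos ht

lemma powerKernel_of_nonpos (ht : t ≤ 0) : powerKernel β a b t = b * (-t) ^ (-β) :=
  if_neg ht.not_gt

@[fun_prop]
lemma measurable_powerKernel : Measurable (powerKernel β a b) :=
  Measurable.ite measurableSet_Ioi (by fun_prop) (by fun_prop)

lemma abs_powerKernel_le (β a b t : ℝ) :
    |powerKernel β a b t| ≤ max |a| |b| * |t| ^ (-β) := by
  obtain ht | ht := lt_or_ge 0 t
  · rw [powerKernel_of_pos ht, abs_mul, abs_of_pos ht, abs_of_pos (rpow_pos_of_pos ht _)]
    gcongr
    exact le_max_left _ _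
  · rw [powerKernel_of_nonpos ht, abs_mul, abs_of_nonpos ht,
      abs_of_nonneg (rpow_nonneg (neg_nonneg.2 ht) _)]
    gcongr
    exacts [rpow_nonneg (neg_nonneg.2 ht) _, le_max_right _ _]

end PowerKernel

/-- `g` varies regularly at both ends of `ℤ`: `g k ∼ a k ^ (-β)` and `g (-k) ∼ b k ^ (-β)` as
`k → ∞`, in the sense that allows `a` and `b` to vanish. -/
structure HasPowerTails (β : ℝ) (g : ℤ → ℝ) (a b : ℝ) : Prop where
  tendsto_pos : Tendsto (fun k : ℕ ↦ (k : ℝ) ^ β * g k) atTop (𝓝 a)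
  tendsto_neg : Tendsto (fun k : ℕ ↦ (k : ℝ) ^ β * g (-k)) atTop (𝓝 b)

namespace HasPowerTails

variable {β a b : ℝ} {g : ℤ → ℝ}

lemma comp_neg (hg : HasPowerTails β g a b) : HasPowerTails β (fun k ↦ g (-k)) b a :=
  ⟨hg.tendsto_neg, by simpa only [neg_neg] using hg.tendsto_pos⟩

lemma isBigO_atTop (hg : HasPowerTails β g a b) :
    g =O[atTop] fun k ↦ (max 1 |(k : ℝ)|) ^ (-β) := by
  rw [← Nat.map_cast_int_atTop, isBigO_map]
  refine ((isBigO_refl (fun k : ℕ ↦ (k : ℝ) ^ (-β)) atTop).mul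
    (hg.tendsto_pos.isBigO_one ℝ)).congr' ?_ ?_
  all_goals
    filter_upwards [eventually_ge_atTop 1] with k hk
    have hk : (1 : ℝ) ≤ k := mod_cast hk
  · rw [rpow_neg (by positivity), inv_mul_cancel_left₀ (by positivity), Function.comp_apply]
  · simp [max_eq_right hk]

lemma isBigO_atBot (hg : HasPowerTails β g a b) :
    g =O[atBot] fun k ↦ (max 1 |(k : ℝ)|) ^ (-β) := by
  simpa [Function.comp_def] using hg.comp_neg.isBigO_atTop.comp_tendsto tendsto_neg_atBot_atTop

lemma exists_abs_le (hg : HasPowerTails β g a b) :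
    ∃ C : ℝ, ∀ k : ℤ, |g k| ≤ C * (max 1 |(k : ℝ)|) ^ (-β) := by
  have hpos (k : ℤ) : 0 < (max 1 |(k : ℝ)|) ^ (-β) := by positivity
  have hO : g =O[cofinite] fun k ↦ (max 1 |(k : ℝ)|) ^ (-β) := by
    rw [Int.cofinite_eq]
    exact hg.isBigO_atBot.sup hg.isBigO_atTop
  simpa only [norm_eq_abs, abs_of_pos (hpos _)] using
    (isBigO_cofinite_iff fun k hk ↦ absurd hk (hpos k).ne').1 hO

variable {m : ℕ → ℤ} {t : ℝ}

lemma tendsto_rpow_mul_of_pos (hg : HasPowerTails β g a b) (ht : 0 < t)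
    (hm : Tendsto (fun n ↦ (m n : ℝ) / n) atTop (𝓝 t)) :
    Tendsto (fun n : ℕ ↦ (n : ℝ) ^ β * g (m n)) atTop (𝓝 (a * t ^ (-β))) := by
  have hm_atTop : Tendsto m atTop atTop := by
    rw [← tendsto_intCast_atTop_iff (R := ℝ)]
    refine (hm.pos_mul_atTop ht tendsto_natCast_atTop_atTop).congr' ?_
    filter_upwards [eventually_ne_atTop 0] with n hn
    exact div_mul_cancel₀ _ (Nat.cast_ne_zero.2 hn)
  have htail : Tendsto (fun k : ℤ ↦ (k : ℝ) ^ β * g k) atTop (𝓝 a) := by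
    rw [← Nat.map_cast_int_atTop, tendsto_map'_iff]
    exact hg.tendsto_pos
  refine ((htail.comp hm_atTop).mul (hm.rpow_const (p := -β) (.inl ht.ne'))).congr' ?_
  filter_upwards [eventually_gt_atTop 0, hm_atTop.eventually_gt_atTop 0] with n hn hmn
  have hn : (0 : ℝ) < n := mod_cast hn
  have hmn : (0 : ℝ) < m n := mod_cast hmn
  rw [Function.comp_apply, rpow_neg (by positivity), div_rpow hmn.le hn.le]
  field

lemma tendsto_rpow_mul (hg : HasPowerTails β g a b) (ht : t ≠ 0)
    (hm : Tendsto (fun n ↦ (m n : ℝ) / n) atTop (𝓝 t)) :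
    Tendsto (fun n : ℕ ↦ (n : ℝ) ^ β * g (m n)) atTop (𝓝 (powerKernel β a b t)) := by
  obtain ht | ht := ht.lt_or_gt
  · have hm_neg : Tendsto (fun n ↦ ((-m n : ℤ) : ℝ) / n) atTop (𝓝 (-t)) := by
      simpa only [Int.cast_neg, neg_div] using hm.neg
    simpa only [powerKernel_of_nonpos ht.le, neg_neg] using
      hg.comp_neg.tendsto_rpow_mul_of_pos (neg_pos.2 ht) hm_neg
  · simpa only [powerKernel_of_pos ht] using hg.tendsto_rpow_mul_of_pos ht hm

end HasPowerTails

section Ceil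

variable {x y : ℝ}

lemma tendsto_natCeil_mul_sub_natCeil_mul_div (hx : 0 ≤ x) (hy : 0 ≤ y) :
    Tendsto (fun n : ℕ ↦ (((⌈x * n⌉₊ : ℤ) - ⌈y * n⌉₊ : ℤ) : ℝ) / n) atTop (𝓝 (x - y)) := by
  have hx_lim := (tendsto_nat_ceil_mul_div_atTop hx).comp (tendsto_natCast_atTop_atTop (R := ℝ))
  have hy_lim := (tendsto_nat_ceil_mul_div_atTop hy).comp (tendsto_natCast_atTop_atTop (R := ℝ))
  simpa [Function.comp_def, sub_div] using hx_lim.sub hy_lim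

lemma abs_sub_le_abs_natCeil_sub_natCeil_add_one (hx : 0 ≤ x) (hy : 0 ≤ y) :
    |x - y| ≤ |(⌈x⌉₊ : ℝ) - ⌈y⌉₊| + 1 := by
  have hx_lt := Nat.ceil_lt_add_one hx
  have hy_lt := Nat.ceil_lt_add_one hy
  rw [abs_le]
  constructor <;> linarith [Nat.le_ceil x, Nat.le_ceil y, le_abs_self ((⌈x⌉₊ : ℝ) - ⌈y⌉₊),
    neg_abs_le ((⌈x⌉₊ : ℝ) - ⌈y⌉₊)]

lemma natCeil_mul_mem_Icc {n : ℕ} (hn : 0 < n) (hx : x ∈ Set.Ioc 0 1) :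
    ⌈x * n⌉₊ ∈ Finset.Icc 1 n := by
  have hn : (0 : ℝ) < n := mod_cast hn
  rw [Finset.mem_Icc, Nat.one_le_ceil_iff, Nat.ceil_le]
  exact ⟨mul_pos hx.1 hn, mul_le_of_le_one_left hn.le hx.2⟩

lemma natCeil_mul_eq_iff {n k : ℕ} (hn : 0 < n) (hk : 0 < k) :
    ⌈x * n⌉₊ = k ↔ x ∈ Set.Ioc ((k - 1 : ℝ) / n) (k / n) := by
  have hn : (0 : ℝ) < n := mod_cast hn
  rw [Nat.ceil_eq_iff hk.ne', Set.mem_Ioc, div_lt_iff₀ hn, le_div_iff₀ hn, Nat.cast_pred hk]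

lemma abs_rpow_mul_apply_natCeil_sub_le {β C : ℝ} {g : ℤ → ℝ}
    (hg : ∀ k : ℤ, |g k| ≤ C * (max 1 |(k : ℝ)|) ^ (-β)) {n : ℕ} (hn : 0 < n)
    (hx : x ∈ Set.Ioc 0 1) (hy : y ∈ Set.Ioc 0 1) (hxy : x ≠ y) :
    |(n : ℝ) ^ β * g (⌈x * n⌉₊ - ⌈y * n⌉₊)| ≤ C * (|x - y| / 2) ^ (-β⁺) := by
  set k : ℤ := ⌈x * n⌉₊ - ⌈y * n⌉₊ with hk
  have hn_pos : (0 : ℝ) < n := mod_cast hn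
  have hdist : 0 < |x - y| / 2 := half_pos (abs_pos.2 (sub_ne_zero.2 hxy))
  have hC : 0 ≤ C := by simpa using (abs_nonneg _).trans (hg 0)
  have hupper : max 1 |(k : ℝ)| / n ≤ 1 := by
    have hkx := Finset.mem_Icc.1 (natCeil_mul_mem_Icc hn hx)
    have hky := Finset.mem_Icc.1 (natCeil_mul_mem_Icc hn hy)
    have hk_le : |k| ≤ n := abs_le.2 ⟨by lia, by lia⟩
    rw [div_le_one hn_pos]
    exact max_le (mod_cast hn) (mod_cast hk_le)
  have hlower : |x - y| / 2 ≤ max 1 |(k : ℝ)| / n := by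
    have hscale := abs_sub_le_abs_natCeil_sub_natCeil_add_one (mul_nonneg hx.1.le hn_pos.le)
      (mul_nonneg hy.1.le hn_pos.le)
    rw [← sub_mul, abs_mul, abs_of_pos hn_pos] at hscale
    rw [div_le_div_iff₀ two_pos hn_pos, hk]
    push_cast
    linarith [le_max_left 1 |(⌈x * n⌉₊ : ℝ) - ⌈y * n⌉₊|,
      le_max_right 1 |(⌈x * n⌉₊ : ℝ) - ⌈y * n⌉₊|]
  calc |(n : ℝ) ^ β * g k| = n ^ β * |g k| := by rw [abs_mul, abs_of_pos (rpow_pos_of_pos hn_pos β)]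
    _ ≤ n ^ β * (C * (max 1 |(k : ℝ)|) ^ (-β)) := by gcongr; exact hg k
    _ = C * (max 1 |(k : ℝ)| / n) ^ (-β) := by
        rw [div_rpow (by positivity) hn_pos.le, rpow_neg hn_pos.le, div_inv_eq_mul]
        ring
    -- The rescaled lag is at most `1`, so its power grows when the exponent decreases to `-β⁺`.
    _ ≤ C * (max 1 |(k : ℝ)| / n) ^ (-β⁺) := by
        gcongr C * ?_
        exact rpow_le_rpow_of_exponent_ge (by positivity) hupper (neg_le_neg (le_posPart β))
    _ ≤ C * (|x - y| / 2) ^ (-β⁺) := by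
        gcongr C * ?_
        exact rpow_le_rpow_of_nonpos hdist hlower (neg_nonpos.2 (posPart_nonneg β))

end Ceil

section RiemannSum

lemma setIntegral_comp_eq_sum_smul {α κ E : Type*} [MeasurableSpace α] [NormedAddCommGroup E]
    [NormedSpace ℝ E] [CompleteSpace E] {μ : Measure α} {s : Set α} (hs : MeasurableSet s)
    (hμs : μ s ≠ ⊤) {φ : α → κ} {T : Finset κ} (hφ : ∀ k ∈ T, MeasurableSet (φ ⁻¹' {k}))
    (hφT : Set.MapsTo φ s T) (F : κ → E) :
    ∫ x in s, F (φ x) ∂μ = ∑ k ∈ T, μ.real (φ ⁻¹' {k} ∩ s) • F k := by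
  classical
  have hsplit : Set.EqOn (F ∘ φ) (fun x ↦ ∑ k ∈ T, (φ ⁻¹' {k}).indicator (fun _ ↦ F k) x) s := by
    intro x hx
    have hmem : φ x ∈ T := hφT hx
    simp [Set.indicator_apply, hmem]
  have hint (k : κ) (hk : k ∈ T) :
      Integrable ((φ ⁻¹' {k}).indicator fun _ ↦ F k) (μ.restrict s) :=
    (integrableOn_const hμs).indicator (hφ k hk)
  calc ∫ x in s, F (φ x) ∂μ
      = ∫ x in s, ∑ k ∈ T, (φ ⁻¹' {k}).indicator (fun _ ↦ F k) x ∂μ :=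
        setIntegral_congr_fun hs hsplit
    _ = ∑ k ∈ T, ∫ x in s, (φ ⁻¹' {k}).indicator (fun _ ↦ F k) x ∂μ := integral_finsetSum _ hint
    _ = ∑ k ∈ T, μ.real (φ ⁻¹' {k} ∩ s) • F k := Finset.sum_congr rfl fun k hk ↦ by
        rw [integral_indicator_const _ (hφ k hk), measureReal_restrict_apply (hφ k hk)]

variable {ι : Type*}

lemma preimage_natCeil_mul_singleton {n : ℕ} (hn : 0 < n) {k : ι → ℕ} (hk : ∀ i, 0 < k i) :
    (fun (x : ι → ℝ) i ↦ ⌈x i * n⌉₊) ⁻¹' {k} =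
      Set.univ.pi fun i ↦ Set.Ioc ((k i - 1 : ℝ) / n) (k i / n) := by
  ext x
  simp only [Set.mem_preimage, Set.mem_singleton_iff, funext_iff, natCeil_mul_eq_iff hn (hk _),
    Set.mem_univ_pi]

variable [Fintype ι]

lemma volume_real_pi_Ioc_sub_one_div {n : ℕ} (hn : 0 < n) (k : ι → ℕ) :
    volume.real (Set.univ.pi fun i ↦ Set.Ioc ((k i - 1 : ℝ) / n) (k i / n)) =
      ((n : ℝ) ^ Fintype.card ι)⁻¹ := by
  have hn : (0 : ℝ) < n := mod_cast hn
  have hle (i : ι) : (k i - 1 : ℝ) / n ≤ k i / n :=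
    div_le_div_of_nonneg_right (sub_le_self _ zero_le_one) hn.le
  have hlen (i : ι) : (k i : ℝ) / n - (k i - 1) / n = (n : ℝ)⁻¹ := by field
  rw [measureReal_def, volume_pi_Ioc_toReal hle, Finset.prod_congr rfl fun i _ ↦ hlen i,
    Finset.prod_const, Finset.card_univ, inv_pow]

lemma setIntegral_comp_natCeil_mul [DecidableEq ι] {E : Type*} [NormedAddCommGroup E]
    [NormedSpace ℝ E] [CompleteSpace E] (F : (ι → ℕ) → E) {n : ℕ} (hn : 0 < n) :
    ∫ x in Set.univ.pi fun _ : ι ↦ Set.Ioc (0 : ℝ) 1, F (fun i ↦ ⌈x i * n⌉₊) =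
      ((n : ℝ) ^ Fintype.card ι)⁻¹ • ∑ k ∈ Fintype.piFinset fun _ ↦ Finset.Icc 1 n, F k := by
  have hk_mem {k : ι → ℕ} (hk : k ∈ Fintype.piFinset fun _ ↦ Finset.Icc 1 n) (i : ι) :
      0 < k i ∧ k i ≤ n := Finset.mem_Icc.1 (Fintype.mem_piFinset.1 hk i)
  have hcell {k : ι → ℕ} (hk : k ∈ Fintype.piFinset fun _ ↦ Finset.Icc 1 n) :=
    preimage_natCeil_mul_singleton hn fun i ↦ (hk_mem hk i).1
  have hcell_subset {k : ι → ℕ} (hk : k ∈ Fintype.piFinset fun _ ↦ Finset.Icc 1 n) :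
      (Set.univ.pi fun i ↦ Set.Ioc ((k i - 1 : ℝ) / n) (k i / n)) ⊆
        Set.univ.pi fun _ ↦ Set.Ioc 0 1 := by
    refine Set.pi_mono fun i _ ↦ Set.Ioc_subset_Ioc ?_ ?_
    · exact div_nonneg (sub_nonneg.2 (mod_cast (hk_mem hk i).1)) n.cast_nonneg
    · exact div_le_one_of_le₀ (mod_cast (hk_mem hk i).2) n.cast_nonneg
  rw [setIntegral_comp_eq_sum_smul (φ := fun (x : ι → ℝ) i ↦ ⌈x i * n⌉₊)
    (T := Fintype.piFinset fun _ ↦ Finset.Icc 1 n) (F := F), Finset.smul_sum]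
  · refine Finset.sum_congr rfl fun k hk ↦ ?_
    rw [hcell hk, Set.inter_eq_left.2 (hcell_subset hk), volume_real_pi_Ioc_sub_one_div hn]
  · exact MeasurableSet.univ_pi fun _ ↦ measurableSet_Ioc
  · simp [volume_pi_Ioc]
  · intro k hk
    rw [hcell hk]
    exact MeasurableSet.univ_pi fun _ ↦ measurableSet_Ioc
  · exact fun x hx ↦ Fintype.mem_piFinset.2 fun i ↦ natCeil_mul_mem_Icc hn (hx i trivial)

lemma rpow_mul_sum_prod_eq_setIntegral [DecidableEq ι] (σ : Equiv.Perm ι) (β : ι → ℝ)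
    (g : ι → ℤ → ℝ) {n : ℕ} (hn : 0 < n) :
    (n : ℝ) ^ (∑ i, β i - Fintype.card ι) *
        ∑ k ∈ Fintype.piFinset fun _ : ι ↦ Finset.Icc 1 n, ∏ i, g i ((k (σ i) : ℤ) - k i) =
      ∫ x in Set.univ.pi fun _ : ι ↦ Set.Ioc (0 : ℝ) 1,
        ∏ i, (n : ℝ) ^ β i * g i (⌈x (σ i) * n⌉₊ - ⌈x i * n⌉₊) := by
  have hn_pos : (0 : ℝ) < n := mod_cast hn
  rw [setIntegral_comp_natCeil_mul
    (fun k : ι → ℕ ↦ ∏ i, (n : ℝ) ^ β i * g i ((k (σ i) : ℤ) - k i)) hn]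
  simp only [Finset.prod_mul_distrib, ← Finset.mul_sum, ← rpow_sum_of_pos hn_pos, smul_eq_mul]
  rw [rpow_sub hn_pos, rpow_natCast]
  ring

end RiemannSum

section CyclicSum

variable {ι : Type*} [Fintype ι] {σ : Equiv.Perm ι} {β a b : ι → ℝ} {g : ι → ℤ → ℝ}

lemma ae_apply_ne_apply {i j : ι} (hij : i ≠ j) : ∀ᵐ x : ι → ℝ, x i ≠ x j := by
  classical
  let V : Submodule ℝ (ι → ℝ) :=
    LinearMap.eqLocus (LinearMap.proj (R := ℝ) (φ := fun _ ↦ ℝ) i) (LinearMap.proj j)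
  have hV : V ≠ ⊤ := fun h ↦ by
    have hmem : Pi.single i 1 ∈ V := h ▸ Submodule.mem_top
    simp [V, hij.symm] at hmem
  rw [ae_iff]
  simp only [ne_eq, not_not]
  exact Measure.addHaar_submodule volume V hV

variable [Nontrivial ι]

lemma ae_apply_perm_ne (hσ : σ.IsCycleOn Set.univ) :
    ∀ᵐ x : ι → ℝ, ∀ i, x (σ i) ≠ x i :=
  ae_all_iff.2 fun i ↦ ae_apply_ne_apply (hσ.apply_ne Set.nontrivial_univ (Set.mem_univ i))

lemma integrableOn_prod_powerKernel (hσ : σ.IsCycleOn Set.univ) (hβ : ∀ i, β i < 1)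
    (hsum : ∑ i, β i < Fintype.card ι - 1) (a b : ι → ℝ) :
    IntegrableOn (fun x : ι → ℝ ↦ ∏ i, powerKernel (β i) (a i) (b i) (x (σ i) - x i))
      (Set.univ.pi fun _ ↦ Set.Icc 0 1) := by
  refine ((integrableOn_prod_abs_increment_rpow hσ hβ hsum).const_mul
    (∏ i, max |a i| |b i|)).mono' (Measurable.aestronglyMeasurable (by fun_prop))
    (.of_forall fun x ↦ ?_)
  rw [norm_eq_abs, Finset.abs_prod, ← Finset.prod_mul_distrib]
  exact Finset.prod_le_prod (fun i _ ↦ abs_nonneg _) fun i _ ↦ abs_powerKernel_le ..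

lemma tendsto_setIntegral_prod_rpow_mul (hσ : σ.IsCycleOn Set.univ) (hβ : ∀ i, β i < 1)
    (hsum : ∑ i, β i < Fintype.card ι - 1) (hg : ∀ i, HasPowerTails (β i) (g i) (a i) (b i)) :
    Tendsto (fun n : ℕ ↦ ∫ x in Set.univ.pi fun _ : ι ↦ Set.Ioc (0 : ℝ) 1,
        ∏ i, (n : ℝ) ^ β i * g i (⌈x (σ i) * n⌉₊ - ⌈x i * n⌉₊)) atTop
      (𝓝 (∫ x in Set.univ.pi fun _ : ι ↦ Set.Ioc (0 : ℝ) 1,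
        ∏ i, powerKernel (β i) (a i) (b i) (x (σ i) - x i))) := by
  choose C hC using fun i ↦ (hg i).exists_abs_le
  have hne : ∀ᵐ x ∂volume.restrict (Set.univ.pi fun _ : ι ↦ Set.Ioc (0 : ℝ) 1),
      (∀ i, x i ∈ Set.Ioc 0 1) ∧ ∀ i, x (σ i) ≠ x i := by
    filter_upwards [ae_restrict_mem (MeasurableSet.univ_pi fun _ ↦ measurableSet_Ioc),
      ae_restrict_of_ae (ae_apply_perm_ne hσ)] with x hx hx_ne
    exact ⟨fun i ↦ hx i trivial, hx_ne⟩
  have hdom : IntegrableOn (fun x : ι → ℝ ↦ ∏ i, C i * (|x (σ i) - x i| / 2) ^ (-(β i)⁺))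
      (Set.univ.pi fun _ ↦ Set.Ioc 0 1) := by
    have hint := (integrableOn_prod_abs_increment_rpow hσ (fun i ↦ max_lt (hβ i) one_pos)
      (sum_posPart_lt_card_sub_one hβ hsum)).mono_set
        (Set.pi_mono fun _ _ ↦ Set.Ioc_subset_Icc_self)
    refine (hint.const_mul (∏ i, C i / 2 ^ (-(β i)⁺))).congr (.of_forall fun x ↦ ?_)
    simp only [div_rpow (abs_nonneg _) zero_le_two, mul_div_assoc', div_mul_eq_mul_div,
      ← Finset.prod_mul_distrib]
    rfl
  refine tendsto_integral_filter_of_dominated_convergence _ (.of_forall fun n ↦ ?_) ?_ hdom ?_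
  · exact Measurable.aestronglyMeasurable (by fun_prop)
  · filter_upwards [eventually_gt_atTop 0] with n hn
    filter_upwards [hne] with x ⟨hx, hx_ne⟩
    rw [norm_eq_abs, Finset.abs_prod]
    exact Finset.prod_le_prod (fun i _ ↦ abs_nonneg _) fun i _ ↦
      abs_rpow_mul_apply_natCeil_sub_le (hC i) hn (hx _) (hx _) (hx_ne i)
  · filter_upwards [hne] with x ⟨hx, hx_ne⟩
    exact tendsto_finsetProd _ fun i _ ↦ (hg i).tendsto_rpow_mul (sub_ne_zero.2 (hx_ne i))
      (tendsto_natCeil_mul_sub_natCeil_mul_div (hx _).1.le (hx _).1.le)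

theorem stmt15_general [DecidableEq ι] (hσ : σ.IsCycleOn Set.univ) (hβ : ∀ i, β i < 1)
    (hsum : ∑ i, β i < Fintype.card ι - 1) (hg : ∀ i, HasPowerTails (β i) (g i) (a i) (b i)) :
    IntegrableOn (fun x : ι → ℝ ↦ ∏ i, powerKernel (β i) (a i) (b i) (x (σ i) - x i))
      (Set.univ.pi fun _ ↦ Set.Icc 0 1) ∧
    Tendsto (fun n : ℕ ↦ (n : ℝ) ^ (∑ i, β i - Fintype.card ι) *
        ∑ k ∈ Fintype.piFinset fun _ : ι ↦ Finset.Icc 1 n, ∏ i, g i ((k (σ i) : ℤ) - k i)) atTop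
      (𝓝 (∫ x in Set.univ.pi fun _ : ι ↦ Set.Icc (0 : ℝ) 1,
        ∏ i, powerKernel (β i) (a i) (b i) (x (σ i) - x i))) := by
  refine ⟨integrableOn_prod_powerKernel hσ hβ hsum a b, ?_⟩
  have hbox : (Set.univ.pi fun _ : ι ↦ Set.Ioc (0 : ℝ) 1) =ᵐ[volume]
      Set.univ.pi fun _ ↦ Set.Icc 0 1 := by
    rw [Set.pi_univ_Icc]
    exact Measure.univ_pi_Ioc_ae_eq_Icc
  rw [← setIntegral_congr_set hbox]
  refine (tendsto_setIntegral_prod_rpow_mul hσ hβ hsum hg).congr' ?_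
  filter_upwards [eventually_gt_atTop 0] with n hn
  exact (rpow_mul_sum_prod_eq_setIntegral σ β g hn).symm

end CyclicSum

lemma isCycleOn_univ_finRotate {p : ℕ} (hp : 2 ≤ p) : (finRotate p).IsCycleOn Set.univ := by
  rw [← Finset.coe_univ, ← support_finRotate_of_le hp, Equiv.Perm.coe_support_eq_set_support]
  exact (isCycle_finRotate_of_le hp).isCycleOn

/-- Discrete-to-continuum limit for cyclic multilinear sums of regularly varying
bounded functions (analytic core of Theorem 3.10). Here `finRotate p` implements
the cyclic shift `i ↦ i+1` on `Fin p`. -/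
theorem stmt15
    (p : ℕ) (hp : 2 ≤ p)
    (β : Fin p → ℝ) (hβ : ∀ i, β i ∈ Set.Ioo (0:ℝ) 1)
    (hsum : ∑ i, β i < (p : ℝ) - 1)
    (g : Fin p → ℤ → ℝ)
    (hg_bdd : ∀ i, ∃ C : ℝ, ∀ k : ℤ, |g i k| ≤ C)
    (ℓp ℓm : Fin p → ℝ)
    (hgp : ∀ i, Tendsto (fun k : ℕ => (k : ℝ) ^ (β i) * g i (k : ℤ)) atTop (𝓝 (ℓp i)))
    (hgm : ∀ i, Tendsto (fun k : ℕ => (k : ℝ) ^ (β i) * g i (-(k : ℤ))) atTop (𝓝 (ℓm i)))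
    (h : Fin p → ℝ → ℝ)
    (hh : ∀ i t, h i t = if 0 < t then ℓp i * t ^ (-(β i)) else ℓm i * (-t) ^ (-(β i))) :
    IntegrableOn (fun x : Fin p → ℝ => ∏ i, h i (x (finRotate p i) - x i))
      (Set.univ.pi fun _ : Fin p => Set.Icc (0:ℝ) 1) ∧
    Tendsto (fun n : ℕ =>
        (n : ℝ) ^ (∑ i, β i - (p : ℝ)) *
          ∑ k ∈ Fintype.piFinset (fun _ : Fin p => Finset.Icc 1 n),
            ∏ i, g i ((k (finRotate p i) : ℤ) - (k i : ℤ)))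
      atTop
      (𝓝 (∫ x in Set.univ.pi fun _ : Fin p => Set.Icc (0:ℝ) 1,
        ∏ i, h i (x (finRotate p i) - x i))) := by
  obtain rfl : h = fun i ↦ powerKernel (β i) (ℓp i) (ℓm i) := funext₂ hh
  have : Nontrivial (Fin p) := Fin.nontrivial_iff_two_le.2 hp
  simpa only [Fintype.card_fin] using stmt15_general (isCycleOn_univ_finRotate hp)
    (fun i ↦ (hβ i).2) (by rwa [Fintype.card_fin]) fun i ↦ ⟨hgp i, hgm i⟩
end

section
/- Let $\alpha,\nu>0$ and $H\in(0,1)$ with $H\neq 1/2$. Define $r(s)=\nu^{2}\,\frac{\Gamma(2H+1)\sin(\pi H)}{2\pi}\int_{-\infty}^{\infty}\cos(sx)\,\frac{|x|^{1-2H}}{\alpha^{2}+x^{2}}\,dx$ and $V=\nu^{2}\,\frac{\Gamma(2H+1)}{2\alpha^{2H}}$. Then, as $s\to 0^{+}$, $r(s)=V-\frac{\nu^{2}}{2}\,s^{2H}+\frac{\alpha^{2}}{2}\,V\,s^{2}-\frac{\alpha^{2}\nu^{2}}{4(H+1)(1+2H)}\,s^{2H+2}+o\big(s^{2H+2}\big)$.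 -/
open MeasureTheory Filter Asymptotics Topology Real

/-!
On the half-line, `cos (s x) x^(1-2H) / (a² + x²)` equals
`(1 + a² s² / 2) x^(1-2H) / (a² + x²) - (1 - cos (s x)) x^(-(2H+1))
  - a² ((s x)² / 2 - (1 - cos (s x))) x^(-(2H+1)) / (a² + x²)`.
The substitution `y = s x` turns the integral of the second term into `s^(2H)` times a constant, and
that of the third into `s^(2H+2)` times an integral which converges by dominated convergence. A
power `y^(-p)` is itself a Laplace transform in `y`, so by Tonelli
`Γ(p) ∫ φ(y) y^(-p) dy = ∫ t^(p-1) (ℒφ)(t) dt`; this evaluates the three resulting constants by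
reducing each of them to Euler's reflection formula.
-/

section Tonelli

variable {α β : Type*} [MeasurableSpace α] [MeasurableSpace β] {μ : Measure α} {ν : Measure β}
  [SFinite ν] {f : α → β → ℝ}

theorem integral_integral_eq_toReal_lintegral_lintegral
    (hfm : AEStronglyMeasurable (Function.uncurry f) (μ.prod ν))
    (hf : ∀ᵐ z ∂μ.prod ν, 0 ≤ f z.1 z.2) (hfi : ∀ᵐ x ∂μ, Integrable (f x) ν) :
    ∫ x, ∫ y, f x y ∂ν ∂μ = (∫⁻ x, ∫⁻ y, ENNReal.ofReal (f x y) ∂ν ∂μ).toReal := by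
  have hf' : ∀ᵐ x ∂μ, ∀ᵐ y ∂ν, 0 ≤ f x y := Measure.ae_ae_of_ae_prod hf
  rw [integral_eq_lintegral_of_nonneg_ae (hf'.mono fun x hx => integral_nonneg_of_ae hx)
    hfm.integral_prod_right']
  congr 1
  refine lintegral_congr_ae ?_
  filter_upwards [hf', hfi] with x hx hxi using ofReal_integral_eq_lintegral_ofReal hxi hx

theorem integral_integral_swap_of_nonneg [SFinite μ]
    (hfm : AEStronglyMeasurable (Function.uncurry f) (μ.prod ν))
    (hf : ∀ᵐ z ∂μ.prod ν, 0 ≤ f z.1 z.2) (hfi₁ : ∀ᵐ x ∂μ, Integrable (f x) ν)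
    (hfi₂ : ∀ᵐ y ∂ν, Integrable (fun x => f x y) μ) :
    ∫ x, ∫ y, f x y ∂ν ∂μ = ∫ y, ∫ x, f x y ∂μ ∂ν := by
  rw [integral_integral_eq_toReal_lintegral_lintegral hfm hf hfi₁,
    integral_integral_eq_toReal_lintegral_lintegral hfm.prod_swap
      (Measure.measurePreserving_swap.quasiMeasurePreserving.ae hf) hfi₂,
    lintegral_lintegral_swap hfm.aemeasurable.ennreal_ofReal]

end Tonelli

/-- The Laplace transform `∫₀^∞ φ(y) e^(-ty) dy` converges absolutely at the point `t` and has the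
value `l` there; the real counterpart of `HasMellin`. -/
def HasLaplace (φ : ℝ → ℝ) (t l : ℝ) : Prop :=
  IntegrableOn (fun y => φ y * exp (-(t * y))) (Set.Ioi 0) ∧
    ∫ y in Set.Ioi 0, φ y * exp (-(t * y)) = l

namespace HasLaplace

variable {φ ψ : ℝ → ℝ} {t l m : ℝ}

theorem sub (hφ : HasLaplace φ t l) (hψ : HasLaplace ψ t m) :
    HasLaplace (fun y => φ y - ψ y) t (l - m) := by
  simp only [HasLaplace, sub_mul]
  exact ⟨hφ.1.sub hψ.1, by rw [integral_sub hφ.1 hψ.1, hφ.2, hψ.2]⟩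

theorem div_const (hφ : HasLaplace φ t l) (c : ℝ) : HasLaplace (fun y => φ y / c) t (l / c) := by
  simp only [HasLaplace, div_mul_eq_mul_div]
  exact ⟨hφ.1.div_const c, by rw [integral_div, hφ.2]⟩

theorem aestronglyMeasurable (hφ : HasLaplace φ t l) :
    AEStronglyMeasurable φ (volume.restrict (Set.Ioi 0)) := by
  have hexp : Measurable fun y : ℝ => exp (t * y) := by fun_prop
  refine (hφ.1.aestronglyMeasurable.mul hexp.aestronglyMeasurable).congr (.of_forall fun y => ?_)
  simp [mul_assoc, ← Real.exp_add]

end HasLaplace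

theorem hasLaplace_rpow_sub_one {p t : ℝ} (hp : 0 < p) (ht : 0 < t) :
    HasLaplace (fun y => y ^ (p - 1)) t (Gamma p * t ^ (-p)) := by
  have hval : ∫ y in Set.Ioi (0 : ℝ), y ^ (p - 1) * exp (-(t * y)) = Gamma p * t ^ (-p) := by
    rw [integral_rpow_mul_exp_neg_mul_Ioi hp ht, one_div, inv_rpow ht.le, rpow_neg ht.le, mul_comm]
  have hne : Gamma p * t ^ (-p) ≠ 0 := (mul_pos (Gamma_pos_of_pos hp) (rpow_pos_of_pos ht _)).ne'
  exact ⟨.of_integral_ne_zero (hval ▸ hne), hval⟩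

theorem hasLaplace_pow (n : ℕ) {t : ℝ} (ht : 0 < t) :
    HasLaplace (fun y => y ^ n) t (n.factorial / t ^ (n + 1)) := by
  have h := hasLaplace_rpow_sub_one (p := n + 1) (by positivity) ht
  simp only [add_sub_cancel_right, rpow_natCast] at h
  rwa [Gamma_nat_eq_factorial, rpow_neg ht.le, ← Nat.cast_succ, rpow_natCast, ← div_eq_mul_inv] at h

theorem hasLaplace_one {t : ℝ} (ht : 0 < t) : HasLaplace (fun _ => 1) t (1 / t) := by
  simpa using hasLaplace_pow 0 ht

theorem hasLaplace_exp_neg_mul {b t : ℝ} (h : 0 < b + t) :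
    HasLaplace (fun y => exp (-(b * y))) t (1 / (b + t)) := by
  simpa only [HasLaplace, one_mul, ← exp_add, ← neg_add, ← add_mul] using hasLaplace_one h

theorem hasLaplace_cos {t : ℝ} (ht : 0 < t) : HasLaplace cos t (t / (1 + t ^ 2)) := by
  have hre : (-(t : ℂ) + Complex.I).re < 0 := by simp [ht]
  have hcos (y : ℝ) : RCLike.re (Complex.exp ((-(t : ℂ) + Complex.I) * y)) =
      cos y * exp (-(t * y)) := by
    simp [Complex.exp_re, mul_comm]
  have hint := integrableOn_exp_mul_complex_Ioi hre 0
  refine ⟨hint.re.congr (ae_of_all _ hcos), ?_⟩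
  simp only [← hcos]
  rw [integral_re hint, integral_exp_mul_complex_Ioi hre]
  simp [Complex.div_re, Complex.normSq_apply]
  field_simp
  ring

/-- The two integrals diverge together, and then both sides are `0`. -/
theorem Gamma_mul_integral_mul_rpow_neg {φ L : ℝ → ℝ} {p : ℝ} (hp : 0 < p)
    (hφ : ∀ y, 0 < y → 0 ≤ φ y) (hL : ∀ t, 0 < t → HasLaplace φ t (L t)) :
    Gamma p * ∫ y in Set.Ioi 0, φ y * y ^ (-p) = ∫ t in Set.Ioi 0, t ^ (p - 1) * L t := by
  set μ : Measure ℝ := volume.restrict (Set.Ioi 0)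
  set f : ℝ → ℝ → ℝ := fun y t => φ y * (t ^ (p - 1) * exp (-(y * t)))
  have hpos : ∀ᵐ y ∂μ, 0 < y := ae_restrict_mem measurableSet_Ioi
  have hkernel : Measurable fun z : ℝ × ℝ => z.2 ^ (p - 1) * exp (-(z.1 * z.2)) := by fun_prop
  have hfm : AEStronglyMeasurable (Function.uncurry f) (μ.prod μ) :=
    (hL 1 one_pos).aestronglyMeasurable.comp_fst.mul hkernel.aestronglyMeasurable
  have hf : ∀ᵐ z ∂μ.prod μ, 0 ≤ f z.1 z.2 := by
    rw [Measure.prod_restrict]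
    filter_upwards [ae_restrict_mem (measurableSet_Ioi.prod measurableSet_Ioi)] with z hz
    exact mul_nonneg (hφ _ hz.1) (mul_nonneg (rpow_nonneg hz.2.le _) (exp_nonneg _))
  have hf_swap (t : ℝ) : (fun y => f y t) = fun y => t ^ (p - 1) * (φ y * exp (-(t * y))) := by
    ext y
    simp only [f, mul_comm t y, mul_left_comm]
  calc Gamma p * ∫ y, φ y * y ^ (-p) ∂μ = ∫ y, ∫ t, f y t ∂μ ∂μ := by
        rw [← integral_const_mul]
        refine integral_congr_ae ?_
        filter_upwards [hpos] with y hy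
        rw [integral_const_mul, (hasLaplace_rpow_sub_one hp hy).2, mul_left_comm]
    _ = ∫ t, ∫ y, f y t ∂μ ∂μ := by
        refine integral_integral_swap_of_nonneg hfm hf ?_ ?_
        · filter_upwards [hpos] with y hy using (hasLaplace_rpow_sub_one hp hy).1.const_mul _
        · filter_upwards [hpos] with t ht using hf_swap t ▸ (hL t ht).1.const_mul _
    _ = ∫ t, t ^ (p - 1) * L t ∂μ := by
        refine integral_congr_ae ?_
        filter_upwards [hpos] with t ht
        rw [hf_swap, integral_const_mul, (hL t ht).2]

theorem integral_rpow_sub_one_div_add {b p : ℝ} (hb : 0 < b) (hp : p ∈ Set.Ioo (0 : ℝ) 1) :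
    ∫ t in Set.Ioi (0 : ℝ), t ^ (p - 1) * (1 / (b + t)) = b ^ (p - 1) * (π / sin (π * p)) := by
  rw [← Gamma_mul_integral_mul_rpow_neg hp.1 (fun y _ => exp_nonneg (-(b * y)))
    fun t ht => hasLaplace_exp_neg_mul (add_pos hb ht)]
  have h := (hasLaplace_rpow_sub_one (p := 1 - p) (sub_pos.2 hp.2) hb).2
  rw [sub_sub_cancel_left, neg_sub] at h
  simp only [mul_comm (exp _), h]
  rw [← Gamma_mul_Gamma_one_sub]
  ring

theorem integral_rpow_div_sq_add_sq {a p : ℝ} (ha : 0 < a) (hp : p ∈ Set.Ioo (0 : ℝ) 1) :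
    ∫ t in Set.Ioi 0, t ^ (2 * p - 1) / (a ^ 2 + t ^ 2) =
      a ^ (2 * p - 2) * (π / (2 * sin (π * p))) := by
  have hsubst : ∀ t ∈ Set.Ioi (0 : ℝ),
      (2 * t ^ ((2 : ℝ) - 1)) • ((t ^ (2 : ℝ)) ^ (p - 1) * (1 / (a ^ 2 + t ^ (2 : ℝ)))) =
        2 * (t ^ (2 * p - 1) / (a ^ 2 + t ^ 2)) := fun t (ht : 0 < t) => by
    rw [← rpow_mul ht.le, rpow_two, show 2 * p - 1 = (2 - 1) + 2 * (p - 1) by ring, rpow_add ht,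
      smul_eq_mul]
    ring
  have h := integral_rpow_sub_one_div_add (sq_pos_of_pos ha) hp
  rw [← integral_comp_rpow_Ioi_of_pos two_pos, setIntegral_congr_fun measurableSet_Ioi hsubst,
    integral_const_mul, ← rpow_natCast_mul ha.le, Nat.cast_ofNat, mul_sub_one] at h
  rw [mul_comm 2 (sin _), ← div_div]
  linarith

section FractionalIntegrals

variable {H : ℝ}

theorem sin_pi_mul_pos (hH : H ∈ Set.Ioo (0 : ℝ) 1) : 0 < sin (π * H) :=
  sin_pos_of_pos_of_lt_pi (mul_pos pi_pos hH.1) (mul_lt_of_lt_one_right pi_pos hH.2)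

theorem integral_rpow_one_sub_div_sq_add_sq {a : ℝ} (ha : 0 < a) (hH : H ∈ Set.Ioo (0 : ℝ) 1) :
    ∫ x in Set.Ioi 0, x ^ (1 - 2 * H) / (a ^ 2 + x ^ 2) =
      π / (2 * sin (π * H)) / a ^ (2 * H) := by
  have h := integral_rpow_div_sq_add_sq (p := 1 - H) ha ⟨by linarith [hH.2], by linarith [hH.1]⟩
  rwa [show 2 * (1 - H) - 1 = 1 - 2 * H by ring, show 2 * (1 - H) - 2 = -(2 * H) by ring,
    mul_one_sub, sin_pi_sub, rpow_neg ha.le, inv_mul_eq_div] at h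

theorem integral_rpow_mul_inv_pow_mul (hH : H ∈ Set.Ioo (0 : ℝ) 1) (n : ℕ) :
    ∫ t in Set.Ioi (0 : ℝ), t ^ (2 * H + n - 1) * (1 / (t ^ n * (1 + t ^ 2))) =
      π / (2 * sin (π * H)) := by
  have h := integral_rpow_div_sq_add_sq one_pos hH
  rw [one_rpow, one_mul, one_pow] at h
  rw [← h]
  refine setIntegral_congr_fun measurableSet_Ioi fun t (ht : 0 < t) => ?_
  rw [add_sub_right_comm, rpow_add_natCast ht.ne']
  field_simp

theorem integral_one_sub_cos_mul_rpow (hH : H ∈ Set.Ioo (0 : ℝ) 1) :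
    ∫ y in Set.Ioi 0, (1 - cos y) * y ^ (-(2 * H + 1)) =
      π / (2 * sin (π * H)) / Gamma (2 * H + 1) := by
  have hp : 0 < 2 * H + 1 := by linarith [hH.1]
  rw [eq_div_iff (Gamma_pos_of_pos hp).ne', mul_comm, ← integral_rpow_mul_inv_pow_mul hH 1,
    Nat.cast_one]
  refine Gamma_mul_integral_mul_rpow_neg hp (fun y _ => sub_nonneg.2 (cos_le_one y)) fun t ht => ?_
  convert (hasLaplace_one ht).sub (hasLaplace_cos ht) using 1
  field_simp
  ring

theorem integral_sq_div_two_sub_one_sub_cos_mul_rpow (hH : H ∈ Set.Ioo (0 : ℝ) 1) :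
    ∫ y in Set.Ioi 0, (y ^ 2 / 2 - (1 - cos y)) * y ^ (-(2 * H + 3)) =
      π / (2 * sin (π * H)) / Gamma (2 * H + 3) := by
  have hp : 0 < 2 * H + 3 := by linarith [hH.1]
  rw [eq_div_iff (Gamma_pos_of_pos hp).ne', mul_comm, ← integral_rpow_mul_inv_pow_mul hH 3,
    Nat.cast_ofNat]
  refine Gamma_mul_integral_mul_rpow_neg hp
    (fun y _ => by linarith [one_sub_sq_div_two_le_cos (x := y)]) fun t ht => ?_
  convert ((hasLaplace_pow 2 ht).div_const 2).sub ((hasLaplace_one ht).sub (hasLaplace_cos ht))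
    using 1
  norm_num [Nat.factorial]
  field_simp
  ring

theorem integrableOn_rpow_one_sub_div_sq_add_sq {a : ℝ} (ha : 0 < a)
    (hH : H ∈ Set.Ioo (0 : ℝ) 1) :
    IntegrableOn (fun x => x ^ (1 - 2 * H) / (a ^ 2 + x ^ 2)) (Set.Ioi 0) := by
  have := sin_pi_mul_pos hH
  exact .of_integral_ne_zero (by rw [integral_rpow_one_sub_div_sq_add_sq ha hH]; positivity)

theorem integrableOn_one_sub_cos_mul_rpow (hH : H ∈ Set.Ioo (0 : ℝ) 1) :
    IntegrableOn (fun y => (1 - cos y) * y ^ (-(2 * H + 1))) (Set.Ioi 0) := by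
  have := sin_pi_mul_pos hH
  have := Gamma_pos_of_pos (show 0 < 2 * H + 1 by linarith [hH.1])
  exact .of_integral_ne_zero (by rw [integral_one_sub_cos_mul_rpow hH]; positivity)

theorem integrableOn_sq_div_two_sub_one_sub_cos_mul_rpow (hH : H ∈ Set.Ioo (0 : ℝ) 1) :
    IntegrableOn (fun y => (y ^ 2 / 2 - (1 - cos y)) * y ^ (-(2 * H + 3))) (Set.Ioi 0) := by
  have := sin_pi_mul_pos hH
  have := Gamma_pos_of_pos (show 0 < 2 * H + 3 by linarith [hH.1])
  exact .of_integral_ne_zero (by rw [integral_sq_div_two_sub_one_sub_cos_mul_rpow hH]; positivity)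

end FractionalIntegrals

section Regularization

variable {μ : Measure ℝ} {f : ℝ → ℝ}

theorem norm_mul_sq_div_sq_add_sq_le (u c y : ℝ) : ‖u * (y ^ 2 / (c ^ 2 + y ^ 2))‖ ≤ ‖u‖ := by
  have hquot : 0 ≤ y ^ 2 / (c ^ 2 + y ^ 2) := by positivity
  rw [norm_mul, norm_of_nonneg hquot]
  exact mul_le_of_le_one_right (norm_nonneg u)
    (div_le_one_of_le₀ (le_add_of_nonneg_left (sq_nonneg c)) (by positivity))

theorem aestronglyMeasurable_mul_sq_div_sq_add_sq (hf : AEStronglyMeasurable f μ) (c : ℝ) :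
    AEStronglyMeasurable (fun y => f y * (y ^ 2 / (c ^ 2 + y ^ 2))) μ := by
  have hquot : Measurable fun y : ℝ => y ^ 2 / (c ^ 2 + y ^ 2) := by fun_prop
  exact hf.mul hquot.aestronglyMeasurable

theorem integrable_mul_sq_div_sq_add_sq (hf : Integrable f μ) (c : ℝ) :
    Integrable (fun y => f y * (y ^ 2 / (c ^ 2 + y ^ 2))) μ :=
  hf.mono (aestronglyMeasurable_mul_sq_div_sq_add_sq hf.1 c)
    (.of_forall fun y => norm_mul_sq_div_sq_add_sq_le (f y) c y)

theorem tendsto_integral_mul_sq_div_sq_add_sq [NullSingletonClass μ] (hf : Integrable f μ) :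
    Tendsto (fun c => ∫ y, f y * (y ^ 2 / (c ^ 2 + y ^ 2)) ∂μ) (𝓝 0) (𝓝 (∫ y, f y ∂μ)) := by
  refine tendsto_integral_filter_of_dominated_convergence _
    (.of_forall fun c => aestronglyMeasurable_mul_sq_div_sq_add_sq hf.1 c)
    (.of_forall fun c => .of_forall fun y => norm_mul_sq_div_sq_add_sq_le (f y) c y) hf.norm ?_
  filter_upwards [Measure.ae_ne μ 0] with y hy
  have hcont : ContinuousAt (fun c => f y * (y ^ 2 / (c ^ 2 + y ^ 2))) 0 := by
    fun_prop (disch := positivity)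
  simpa [hy] using hcont.tendsto

end Regularization

section CosineTransform

theorem integral_cos_mul_comp_abs (g : ℝ → ℝ) (s : ℝ) :
    ∫ x, cos (s * x) * g |x| = 2 * ∫ x in Set.Ioi 0, cos (s * x) * g x := by
  rw [← integral_comp_abs (f := fun x => cos (s * x) * g x)]
  congr with x
  rw [← cos_abs (s * x), ← cos_abs (s * |x|), abs_mul, abs_mul, abs_abs]

theorem cos_mul_rpow_div_sq_add_sq_eq (a H : ℝ) {s x : ℝ} (hs : 0 < s) (hx : 0 < x) :
    cos (s * x) * (x ^ (1 - 2 * H) / (a ^ 2 + x ^ 2)) =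
      (1 + a ^ 2 * s ^ 2 / 2) * (x ^ (1 - 2 * H) / (a ^ 2 + x ^ 2)) -
        s ^ (2 * H + 1) * ((1 - cos (s * x)) * (s * x) ^ (-(2 * H + 1))) -
        a ^ 2 * s ^ (2 * H + 3) * (((s * x) ^ 2 / 2 - (1 - cos (s * x))) *
          (s * x) ^ (-(2 * H + 3)) * ((s * x) ^ 2 / ((a * s) ^ 2 + (s * x) ^ 2))) := by
  have hcancel (p : ℝ) : s ^ p * (s * x) ^ (-p) = x ^ (-p) := by
    rw [mul_rpow hs.le hx.le, ← mul_assoc, ← rpow_add hs, add_neg_cancel, rpow_zero, one_mul]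
  have hquot : (s * x) ^ 2 / ((a * s) ^ 2 + (s * x) ^ 2) = x ^ 2 / (a ^ 2 + x ^ 2) := by
    field_simp
  have hpow₁ : x ^ (-(2 * H + 1)) = x ^ (-(2 * H + 3)) * x ^ 2 := by
    rw [← rpow_add_natCast hx.ne']; push_cast; ring_nf
  have hpow₂ : x ^ (1 - 2 * H) = x ^ (-(2 * H + 3)) * x ^ 4 := by
    rw [← rpow_add_natCast hx.ne']; push_cast; ring_nf
  calc cos (s * x) * (x ^ (1 - 2 * H) / (a ^ 2 + x ^ 2)) =
        (1 + a ^ 2 * s ^ 2 / 2) * (x ^ (1 - 2 * H) / (a ^ 2 + x ^ 2)) -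
          (1 - cos (s * x)) * x ^ (-(2 * H + 1)) -
          a ^ 2 * (((s * x) ^ 2 / 2 - (1 - cos (s * x))) * x ^ (-(2 * H + 3)) *
            (x ^ 2 / (a ^ 2 + x ^ 2))) := by
        rw [hpow₁, hpow₂]
        field_simp
        ring
    _ = _ := by
        rw [← hcancel (2 * H + 1), ← hcancel (2 * H + 3), hquot]
        ring

variable {a H : ℝ}

theorem integral_cos_mul_rpow_div_sq_add_sq (ha : 0 < a) (hH : H ∈ Set.Ioo (0 : ℝ) 1) {s : ℝ}
    (hs : 0 < s) :
    ∫ x in Set.Ioi 0, cos (s * x) * (x ^ (1 - 2 * H) / (a ^ 2 + x ^ 2)) =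
      (1 + a ^ 2 * s ^ 2 / 2) * (∫ x in Set.Ioi 0, x ^ (1 - 2 * H) / (a ^ 2 + x ^ 2)) -
        s ^ (2 * H) * (∫ y in Set.Ioi 0, (1 - cos y) * y ^ (-(2 * H + 1))) -
        a ^ 2 * s ^ (2 * H + 2) * ∫ y in Set.Ioi 0,
          (y ^ 2 / 2 - (1 - cos y)) * y ^ (-(2 * H + 3)) * (y ^ 2 / ((a * s) ^ 2 + y ^ 2)) := by
  set f : ℝ → ℝ := fun y => (1 - cos y) * y ^ (-(2 * H + 1))
  set g : ℝ → ℝ := fun y =>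
    (y ^ 2 / 2 - (1 - cos y)) * y ^ (-(2 * H + 3)) * (y ^ 2 / ((a * s) ^ 2 + y ^ 2))
  have hg : IntegrableOn g (Set.Ioi 0) :=
    integrable_mul_sq_div_sq_add_sq (integrableOn_sq_div_two_sub_one_sub_cos_mul_rpow hH) (a * s)
  have hcomp {u : ℝ → ℝ} (hu : IntegrableOn u (Set.Ioi 0)) :
      IntegrableOn (fun x => u (s * x)) (Set.Ioi 0) :=
    (integrableOn_Ioi_comp_mul_left_iff u 0 hs).2 (by rwa [mul_zero])
  have hscale (u : ℝ → ℝ) (p : ℝ) :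
      s ^ (p + 1) * ∫ x in Set.Ioi 0, u (s * x) = s ^ p * ∫ y in Set.Ioi 0, u y := by
    rw [integral_comp_mul_left_Ioi u 0 hs, mul_zero, smul_eq_mul, rpow_add_one hs.ne']
    field_simp
  have h₁ := (integrableOn_rpow_one_sub_div_sq_add_sq ha hH).const_mul (1 + a ^ 2 * s ^ 2 / 2)
  have h₂ := (hcomp (integrableOn_one_sub_cos_mul_rpow hH)).const_mul (s ^ (2 * H + 1))
  have h₃ := (hcomp hg).const_mul (a ^ 2 * s ^ (2 * H + 3))
  rw [setIntegral_congr_fun measurableSet_Ioi fun x hx =>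
      cos_mul_rpow_div_sq_add_sq_eq a H hs hx,
    integral_sub (h₁.sub' h₂) h₃, integral_sub h₁ h₂, integral_const_mul, integral_const_mul,
    integral_const_mul, hscale f, mul_assoc (a ^ 2), mul_assoc (a ^ 2), ← hscale g,
    show 2 * H + 2 + 1 = 2 * H + 3 by ring]

theorem isLittleO_integral_cos_mul_rpow_div_sq_add_sq (ha : 0 < a)
    (hH : H ∈ Set.Ioo (0 : ℝ) 1) :
    (fun s => (∫ x in Set.Ioi 0, cos (s * x) * (x ^ (1 - 2 * H) / (a ^ 2 + x ^ 2))) -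
        π / (2 * sin (π * H)) * ((1 + a ^ 2 * s ^ 2 / 2) / a ^ (2 * H) -
          s ^ (2 * H) / Gamma (2 * H + 1) - a ^ 2 * s ^ (2 * H + 2) / Gamma (2 * H + 3)))
      =o[𝓝[>] 0] fun s => s ^ (2 * H + 2) := by
  have hlim := tendsto_integral_mul_sq_div_sq_add_sq
    (integrableOn_sq_div_two_sub_one_sub_cos_mul_rpow hH)
  set I : ℝ → ℝ := fun c => ∫ y in Set.Ioi 0,
    (y ^ 2 / 2 - (1 - cos y)) * y ^ (-(2 * H + 3)) * (y ^ 2 / (c ^ 2 + y ^ 2))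
  rw [integral_sq_div_two_sub_one_sub_cos_mul_rpow hH] at hlim
  set C := π / (2 * sin (π * H)) / Gamma (2 * H + 3)
  have hscale : Tendsto (fun s => a * s) (𝓝[>] 0) (𝓝 0) :=
    ((continuous_const_mul a).tendsto' 0 0 (mul_zero a)).mono_left nhdsWithin_le_nhds
  have hzero : Tendsto (fun s => -a ^ 2 * (I (a * s) - C)) (𝓝[>] 0) (𝓝 0) := by
    simpa using ((hlim.comp hscale).sub_const C).const_mul (-a ^ 2)
  have hmul := ((isLittleO_one_iff ℝ).2 hzero).mul_isBigO
    (isBigO_refl (fun s : ℝ => s ^ (2 * H + 2)) _)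
  refine hmul.congr' ?_ (.of_forall fun s => one_mul _)
  filter_upwards [self_mem_nhdsWithin] with s hs
  rw [integral_cos_mul_rpow_div_sq_add_sq ha hH hs, integral_rpow_one_sub_div_sq_add_sq ha hH,
    integral_one_sub_cos_mul_rpow hH]
  ring

end CosineTransform

theorem Gamma_add_two {s : ℝ} (hs : s ≠ 0) (hs' : s + 1 ≠ 0) :
    Gamma (s + 2) = (s + 1) * s * Gamma s := by
  rw [← one_add_one_eq_two, ← add_assoc, Gamma_add_one hs', Gamma_add_one hs, mul_assoc]

theorem stmt16_general (α ν H : ℝ) (hα : 0 < α) (hH : H ∈ Set.Ioo (0 : ℝ) 1) (r : ℝ → ℝ)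
    (hr : ∀ s, r s = ν ^ 2 * (Gamma (2 * H + 1) * sin (π * H)) / (2 * π) *
      ∫ x : ℝ, cos (s * x) * (|x| ^ (1 - 2 * H) / (α ^ 2 + x ^ 2)))
    (V : ℝ) (hV : V = ν ^ 2 * Gamma (2 * H + 1) / (2 * α ^ (2 * H))) :
    (fun s : ℝ => r s -
        (V - ν ^ 2 / 2 * s ^ (2 * H) + α ^ 2 / 2 * V * s ^ (2 : ℕ) -
          α ^ 2 * ν ^ 2 / (4 * (H + 1) * (1 + 2 * H)) * s ^ (2 * H + 2)))
      =o[𝓝[>] (0 : ℝ)] fun s : ℝ => s ^ (2 * H + 2) := by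
  have hsin := sin_pi_mul_pos hH
  have hH₀ := hH.1
  have hΓ : Gamma (2 * H + 3) = (2 * H + 2) * (2 * H + 1) * Gamma (2 * H + 1) := by
    convert Gamma_add_two (s := 2 * H + 1) (by positivity) (by positivity) using 2 <;> ring
  have heven (s : ℝ) : ∫ x : ℝ, cos (s * x) * (|x| ^ (1 - 2 * H) / (α ^ 2 + x ^ 2)) =
      2 * ∫ x in Set.Ioi 0, cos (s * x) * (x ^ (1 - 2 * H) / (α ^ 2 + x ^ 2)) := by
    simp only [← integral_cos_mul_comp_abs fun x => x ^ (1 - 2 * H) / (α ^ 2 + x ^ 2), sq_abs]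
  refine ((isLittleO_integral_cos_mul_rpow_div_sq_add_sq hα hH).const_mul_left
    (ν ^ 2 * (Gamma (2 * H + 1) * sin (π * H)) / π)).congr_left fun s => ?_
  rw [hr, hV, heven, hΓ]
  generalize sin (π * H) = S at hsin
  generalize (∫ x in Set.Ioi 0, cos (s * x) * (x ^ (1 - 2 * H) / (α ^ 2 + x ^ 2))) = I
  field_simp
  ring

/-- Short-lag expansion of the autocovariance of the stationary univariate
fractional Ornstein–Uhlenbeck process (Lemma B.4 of the paper). -/
theorem stmt16
    (α ν H : ℝ) (hα : 0 < α) (hν : 0 < ν)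
    (hH : H ∈ Set.Ioo (0:ℝ) 1) (hH2 : H ≠ 1 / 2)
    (r : ℝ → ℝ)
    (hr : ∀ s, r s = ν ^ 2 * (Real.Gamma (2 * H + 1) * Real.sin (π * H)) / (2 * π) *
      ∫ x : ℝ, Real.cos (s * x) * (|x| ^ (1 - 2 * H) / (α ^ 2 + x ^ 2)))
    (V : ℝ) (hV : V = ν ^ 2 * Real.Gamma (2 * H + 1) / (2 * α ^ (2 * H))) :
    (fun s : ℝ => r s -
        (V - ν ^ 2 / 2 * s ^ (2 * H) + α ^ 2 / 2 * V * s ^ (2 : ℕ) -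
          α ^ 2 * ν ^ 2 / (4 * (H + 1) * (1 + 2 * H)) * s ^ (2 * H + 2)))
      =o[𝓝[>] (0:ℝ)] fun s : ℝ => s ^ (2 * H + 2) :=
  stmt16_general α ν H hα hH r hr V hV
end

section
/- Let $\alpha_1,\alpha_2,\nu_1,\nu_2>0$, $H\in(1,2)$, and $\rho,\eta\in\mathbb{R}$. Then $\nu_1\nu_2\,H(H-1)\Big[\frac{\rho-\eta}{2}\int_{-\infty}^{0}\!\int_{-\infty}^{v}e^{\alpha_1 u+\alpha_2 v}\,(v-u)^{H-2}\,du\,dv+\frac{\rho+\eta}{2}\int_{-\infty}^{0}\!\int_{v}^{0}e^{\alpha_1 u+\alpha_2 v}\,(u-v)^{H-2}\,du\,dv\Big]=\frac{\Gamma(H+1)\,\nu_1\nu_2}{2(\alpha_1+\alpha_2)}\Big((\alpha_1^{1-H}+\alpha_2^{1-H})\rho+(\alpha_2^{1-H}-\alpha_1^{1-H})\eta\Big)$, both double integrals being finite. -/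
open MeasureTheory Filter Asymptotics Topology Real

/-! On `u < v < 0` the shear `t = v - u` separates the variables:
`exp (α1 u + α2 v) = exp (-α1 t) * exp ((α1 + α2) v)`. The double integral is therefore the
Laplace transform of `t ^ (H - 2)` at `α1`, that is `Γ(H - 1) α1 ^ (1 - H)`, divided by `α1 + α2`.
By Fubini, the integral over `v < u < 0` is the same one with `α1` and `α2` exchanged, and
`Γ(H + 1) = H (H - 1) Γ(H - 1)` absorbs the prefactor. -/

section Fubini

variable {α β E : Type*} [MeasurableSpace α] [MeasurableSpace β] [NormedAddCommGroup E]
  [NormedSpace ℝ E]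

lemma integral_setIntegral_swap {μ : Measure α} {ν : Measure β} [SFinite μ] [SFinite ν]
    {S : Set (α × β)} (hS : MeasurableSet S) {f : α → β → E}
    (hf : IntegrableOn (Function.uncurry f) S (μ.prod ν)) :
    ∫ x, ∫ y in Prod.mk x ⁻¹' S, f x y ∂ν ∂μ = ∫ y, ∫ x in (·, y) ⁻¹' S, f x y ∂μ ∂ν := by
  have h_swap := integral_integral_swap (f := fun x y ↦ S.indicator (Function.uncurry f) (x, y))
    ((integrable_indicator_iff hS).2 hf)
  calc
    _ = ∫ x, ∫ y, S.indicator (Function.uncurry f) (x, y) ∂ν ∂μ :=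
      integral_congr_ae <| ae_of_all _ fun _ ↦ (integral_indicator (measurable_prodMk_left hS)).symm
    _ = ∫ y, ∫ x, S.indicator (Function.uncurry f) (x, y) ∂μ ∂ν := h_swap
    _ = _ :=
      integral_congr_ae <| ae_of_all _ fun _ ↦ integral_indicator (measurable_prodMk_right hS)

lemma setIntegral_Iio_Ioo_swap {μ ν : Measure ℝ} [SFinite μ] [SFinite ν] {c : ℝ} {f : ℝ → ℝ → E}
    (hf : IntegrableOn (Function.uncurry f) {q | q.2 < c ∧ q.1 < q.2} (μ.prod ν)) :
    ∫ x in Set.Iio c, ∫ y in Set.Ioo x c, f x y ∂ν ∂μ =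
      ∫ y in Set.Iio c, ∫ x in Set.Iio y, f x y ∂μ ∂ν := by
  have h_meas : MeasurableSet {q : ℝ × ℝ | q.1 < q.2} :=
    measurableSet_lt measurable_fst measurable_snd
  have h_int : IntegrableOn (Function.uncurry f) {q | q.1 < q.2}
      ((μ.restrict (Set.Iio c)).prod (ν.restrict (Set.Iio c))) := by
    rw [Measure.prod_restrict, IntegrableOn, Measure.restrict_restrict h_meas]
    exact hf.mono_set fun q hq ↦ ⟨hq.2.2, hq.1⟩
  calc
    _ = ∫ x in Set.Iio c, ∫ y in Set.Ioi x, f x y ∂ν.restrict (Set.Iio c) ∂μ := by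
      simp only [Measure.restrict_restrict measurableSet_Ioi, Set.Ioi_inter_Iio]
    _ = ∫ y in Set.Iio c, ∫ x in Set.Iio y, f x y ∂μ.restrict (Set.Iio c) ∂ν :=
      integral_setIntegral_swap h_meas h_int
    _ = _ := setIntegral_congr_fun measurableSet_Iio fun y (hy : y < c) ↦ by
      simp only [Measure.restrict_restrict measurableSet_Iio, Set.Iio_inter_Iio, min_eq_left hy.le]

end Fubini

section Shear

lemma integrableOn_comp_sub_mul {G : Type*} [AddGroup G] [MeasurableSpace G] [MeasurableAdd₂ G]
    [MeasurableNeg G] {μ ν : Measure G} [SFinite μ] [SFinite ν] [μ.IsAddRightInvariant]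
    [μ.IsNegInvariant] {R : Type*} [NormedRing R] {s t : Set G} (hs : MeasurableSet s)
    (ht : MeasurableSet t) {f g : G → R} (hf : IntegrableOn f s μ) (hg : IntegrableOn g t ν) :
    IntegrableOn (fun q : G × G ↦ f (q.2 - q.1) * g q.2) {q | q.2 - q.1 ∈ s ∧ q.2 ∈ t}
      (μ.prod ν) := by
  have h_prod : IntegrableOn (fun q : G × G ↦ f q.1 * g q.2) (s ×ˢ t) (μ.prod ν) := by
    rw [IntegrableOn, ← Measure.prod_restrict]
    exact hf.mul_prod hg
  have h_shear : MeasurePreserving (fun q : G × G ↦ (q.2 - q.1, q.2)) (μ.prod ν) (μ.prod ν) := by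
    simpa only [Function.comp_def, Prod.map_apply, neg_sub, id_eq] using
      ((Measure.measurePreserving_neg μ).prod (.id ν)).comp (measurePreserving_sub_prod μ ν)
  exact (h_shear.restrict_preimage (hs.prod ht)).integrable_comp_of_integrable h_prod

lemma setIntegral_Iio_eq_setIntegral_Ioi_sub {E : Type*} [NormedAddCommGroup E] [NormedSpace ℝ E]
    (f : ℝ → E) (v : ℝ) : ∫ u in Set.Iio v, f u = ∫ t in Set.Ioi 0, f (v - t) := by
  have h := (volume.measurePreserving_sub_left v).setIntegral_preimage_emb
    (measurableEmbedding_subLeft v) f (Set.Iio v)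
  rw [← h, Set.preimage_const_sub_Iio, sub_self]

end Shear

section Laplace

lemma exp_mul_add_mul_eq_exp_neg_mul_sub_mul_exp (a b u v : ℝ) :
    exp (a * u + b * v) = exp (-(a * (v - u))) * exp ((a + b) * v) := by
  rw [← exp_add]
  ring_nf

variable {a b : ℝ} {k : ℝ → ℝ}

lemma integrableOn_exp_mul_comp_sub_lower (hab : 0 < a + b)
    (hk : IntegrableOn (fun t ↦ k t * exp (-(a * t))) (Set.Ioi 0)) :
    IntegrableOn (fun q : ℝ × ℝ ↦ exp (a * q.1 + b * q.2) * k (q.2 - q.1))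
      {q | q.2 < 0 ∧ q.1 < q.2} := by
  have h_exp : IntegrableOn (fun v ↦ exp ((a + b) * v)) (Set.Iio 0) :=
    (integrableOn_exp_mul_Iic hab 0).mono_set Set.Iio_subset_Iic_self
  have h_factor (q : ℝ × ℝ) : exp (a * q.1 + b * q.2) * k (q.2 - q.1) =
      k (q.2 - q.1) * exp (-(a * (q.2 - q.1))) * exp ((a + b) * q.2) := by
    rw [exp_mul_add_mul_eq_exp_neg_mul_sub_mul_exp]
    ring
  simp only [h_factor]
  exact (integrableOn_comp_sub_mul measurableSet_Ioi measurableSet_Iio hk h_exp).mono_set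
    fun q hq ↦ ⟨sub_pos.2 hq.2, hq.1⟩

lemma setIntegral_exp_mul_comp_sub_lower (hab : 0 < a + b) :
    ∫ v in Set.Iio (0 : ℝ), ∫ u in Set.Iio v, exp (a * u + b * v) * k (v - u) =
      (∫ t in Set.Ioi 0, k t * exp (-(a * t))) / (a + b) := by
  have h_inner (v : ℝ) : ∫ u in Set.Iio v, exp (a * u + b * v) * k (v - u) =
      (∫ t in Set.Ioi 0, k t * exp (-(a * t))) * exp ((a + b) * v) := by
    rw [setIntegral_Iio_eq_setIntegral_Ioi_sub, ← integral_mul_const]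
    congr with t
    rw [exp_mul_add_mul_eq_exp_neg_mul_sub_mul_exp, sub_sub_cancel]
    ring
  simp only [h_inner]
  rw [integral_const_mul, ← integral_Iic_eq_integral_Iio, integral_exp_mul_Iic hab, mul_zero,
    exp_zero, mul_one_div]

lemma integrableOn_exp_mul_comp_sub_upper (hab : 0 < a + b)
    (hk : IntegrableOn (fun t ↦ k t * exp (-(b * t))) (Set.Ioi 0)) :
    IntegrableOn (fun q : ℝ × ℝ ↦ exp (a * q.1 + b * q.2) * k (q.1 - q.2))
      {q | q.2 < 0 ∧ q.2 < q.1 ∧ q.1 < 0} := by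
  have h_swap : MeasurePreserving Prod.swap (volume : Measure (ℝ × ℝ)) volume :=
    Measure.measurePreserving_swap
  have h_lower := (h_swap.integrableOn_comp_preimage
    MeasurableEquiv.prodComm.measurableEmbedding).2
    (integrableOn_exp_mul_comp_sub_lower (add_comm a b ▸ hab) hk)
  simp only [Function.comp_def, Prod.fst_swap, Prod.snd_swap, add_comm (b * _)] at h_lower
  exact h_lower.mono_set fun q hq ↦ ⟨hq.2.2, hq.2.1⟩

lemma setIntegral_exp_mul_comp_sub_upper (hab : 0 < a + b)
    (hk : IntegrableOn (fun t ↦ k t * exp (-(b * t))) (Set.Ioi 0)) :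
    ∫ v in Set.Iio (0 : ℝ), ∫ u in Set.Ioo v 0, exp (a * u + b * v) * k (u - v) =
      (∫ t in Set.Ioi 0, k t * exp (-(b * t))) / (a + b) := by
  rw [add_comm] at hab
  simp only [add_comm (a * _)]
  rw [setIntegral_Iio_Ioo_swap (f := fun v u ↦ exp (b * v + a * u) * k (u - v))
      (integrableOn_exp_mul_comp_sub_lower hab hk),
    setIntegral_exp_mul_comp_sub_lower hab, add_comm]

end Laplace

section Power

variable {a s : ℝ}

lemma integrableOn_rpow_mul_exp_neg_mul (hs : -1 < s) (ha : 0 < a) :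
    IntegrableOn (fun t ↦ t ^ s * exp (-(a * t))) (Set.Ioi 0) := by
  simpa only [rpow_one, neg_mul] using integrableOn_rpow_mul_exp_neg_mul_rpow hs one_pos ha

lemma setIntegral_rpow_mul_exp_neg_mul (hs : -1 < s) (ha : 0 < a) :
    ∫ t in Set.Ioi 0, t ^ s * exp (-(a * t)) = a ^ (-(s + 1)) * Gamma (s + 1) := by
  have h := integral_rpow_mul_exp_neg_mul_Ioi (neg_lt_iff_pos_add.1 hs) ha
  rwa [add_sub_cancel_right, one_div, ← rpow_neg_eq_inv_rpow] at h

end Power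

lemma Gamma_add_one_eq_mul_Gamma_sub_one {s : ℝ} (hs₀ : s ≠ 0) (hs₁ : s ≠ 1) :
    Gamma (s + 1) = s * ((s - 1) * Gamma (s - 1)) := by
  rw [Gamma_add_one hs₀, ← Gamma_add_one (sub_ne_zero.2 hs₁), sub_add_cancel]

theorem stmt17_general {α1 α2 H : ℝ} (ν1 ν2 ρ η : ℝ) (hα1 : 0 < α1) (hα2 : 0 < α2) (hH : 1 < H) :
    IntegrableOn
      (fun q : ℝ × ℝ => Real.exp (α1 * q.1 + α2 * q.2) * (q.2 - q.1) ^ (H - 2))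
      {q : ℝ × ℝ | q.2 < 0 ∧ q.1 < q.2} ∧
    IntegrableOn
      (fun q : ℝ × ℝ => Real.exp (α1 * q.1 + α2 * q.2) * (q.1 - q.2) ^ (H - 2))
      {q : ℝ × ℝ | q.2 < 0 ∧ q.2 < q.1 ∧ q.1 < 0} ∧
    ν1 * ν2 * (H * (H - 1)) *
        ((ρ - η) / 2 *
            ∫ v in Set.Iio (0:ℝ), ∫ u in Set.Iio v,
              Real.exp (α1 * u + α2 * v) * (v - u) ^ (H - 2)) +
      ν1 * ν2 * (H * (H - 1)) *
        ((ρ + η) / 2 *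
            ∫ v in Set.Iio (0:ℝ), ∫ u in Set.Ioo v (0:ℝ),
              Real.exp (α1 * u + α2 * v) * (u - v) ^ (H - 2)) =
      Real.Gamma (H + 1) * ν1 * ν2 / (2 * (α1 + α2)) *
        ((α1 ^ (1 - H) + α2 ^ (1 - H)) * ρ + (α2 ^ (1 - H) - α1 ^ (1 - H)) * η) := by
  have h_exponent : -1 < H - 2 := by linarith
  have h_sum : 0 < α1 + α2 := add_pos hα1 hα2
  have h_int₁ := integrableOn_rpow_mul_exp_neg_mul h_exponent hα1
  have h_int₂ := integrableOn_rpow_mul_exp_neg_mul h_exponent hα2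
  have h_Gamma := Gamma_add_one_eq_mul_Gamma_sub_one (by linarith : H ≠ 0) hH.ne'
  refine ⟨integrableOn_exp_mul_comp_sub_lower (k := (· ^ (H - 2))) h_sum h_int₁,
    integrableOn_exp_mul_comp_sub_upper (k := (· ^ (H - 2))) h_sum h_int₂, ?_⟩
  rw [setIntegral_exp_mul_comp_sub_lower (k := (· ^ (H - 2))) h_sum,
    setIntegral_exp_mul_comp_sub_upper (k := (· ^ (H - 2))) h_sum h_int₂,
    setIntegral_rpow_mul_exp_neg_mul h_exponent hα1,
    setIntegral_rpow_mul_exp_neg_mul h_exponent hα2, h_Gamma,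
    show H - 2 + 1 = H - 1 by ring, neg_sub]
  field_simp
  ring

/-- Equation (2.3) of Theorem 2.2: evaluation of the lag-zero cross-covariance
of the stationary bivariate fractional Ornstein–Uhlenbeck process for
`H = H₁ + H₂ ∈ (1,2)`, the two double integrals being finite. -/
theorem stmt17
    (α1 α2 ν1 ν2 H ρ η : ℝ)
    (hα1 : 0 < α1) (hα2 : 0 < α2) (hν1 : 0 < ν1) (hν2 : 0 < ν2)
    (hH : H ∈ Set.Ioo (1:ℝ) 2) :
    IntegrableOn
      (fun q : ℝ × ℝ => Real.exp (α1 * q.1 + α2 * q.2) * (q.2 - q.1) ^ (H - 2))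
      {q : ℝ × ℝ | q.2 < 0 ∧ q.1 < q.2} ∧
    IntegrableOn
      (fun q : ℝ × ℝ => Real.exp (α1 * q.1 + α2 * q.2) * (q.1 - q.2) ^ (H - 2))
      {q : ℝ × ℝ | q.2 < 0 ∧ q.2 < q.1 ∧ q.1 < 0} ∧
    ν1 * ν2 * (H * (H - 1)) *
        ((ρ - η) / 2 *
            ∫ v in Set.Iio (0:ℝ), ∫ u in Set.Iio v,
              Real.exp (α1 * u + α2 * v) * (v - u) ^ (H - 2)) +
      ν1 * ν2 * (H * (H - 1)) *
        ((ρ + η) / 2 *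
            ∫ v in Set.Iio (0:ℝ), ∫ u in Set.Ioo v (0:ℝ),
              Real.exp (α1 * u + α2 * v) * (u - v) ^ (H - 2)) =
      Real.Gamma (H + 1) * ν1 * ν2 / (2 * (α1 + α2)) *
        ((α1 ^ (1 - H) + α2 ^ (1 - H)) * ρ + (α2 ^ (1 - H) - α1 ^ (1 - H)) * η) :=
  stmt17_general ν1 ν2 ρ η hα1 hα2 hH.1
end

section
/- Let $H_1,H_2\in(0,1)$ with $H_1+H_2<3/2$. For $n\in\mathbb{N}$ define $\gamma_i^{n}(k)=(1+|k|)^{2H_i-2}\,\mathbf{1}_{\{|k|<n\}}$ for $k\in\mathbb{Z}$ and $i=1,2$. Then $\frac{1}{n}\sum_{k=-n}^{n}\Big(\sum_{j\in\mathbb{Z}}\gamma_1^{n}(j)\,\gamma_2^{n}(k-j)\Big)^{2}\longrightarrow 0$ as $n\to\infty$. -/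
open MeasureTheory Filter Asymptotics Topology Real

/-!
By the triangle inequality `1 + |k| ≤ (1 + |j|) (1 + |k - j|)`, so a small power `(1 + |k|) ^ (-d)`
can be factored out of `(1 + |j|) ^ (2 * H₁ - 2) * (1 + |k - j|) ^ (2 * H₂ - 2)`. Since
`H₁ + H₂ < 3 / 2`, for `d` small the remaining product is still summable in `j`, uniformly in `k`.
The convolution is therefore `O((1 + |k|) ^ (-d))` uniformly in `n`, and its square has vanishing
Cesàro means. This replaces Young's inequality by a pointwise bound.
-/

section Convolution

lemma rpow_neg_mul_rpow_neg_le_add {x y a b : ℝ} (hx : 0 < x) (hy : 0 < y) (ha : 0 ≤ a)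
    (hb : 0 ≤ b) : x ^ (-a) * y ^ (-b) ≤ x ^ (-(a + b)) + y ^ (-(a + b)) := by
  rw [neg_add, rpow_add hx, rpow_add hy]
  rcases le_total x y with hxy | hyx
  · have hyb : y ^ (-b) ≤ x ^ (-b) := rpow_le_rpow_of_nonpos hx hxy (neg_nonpos.2 hb)
    exact le_add_of_le_of_nonneg (by gcongr) (by positivity)
  · have hxa : x ^ (-a) ≤ y ^ (-a) := rpow_le_rpow_of_nonpos hy hyx (neg_nonpos.2 ha)
    exact le_add_of_nonneg_of_le (by positivity) (by gcongr)

variable {G : Type*} [SeminormedAddGroup G]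

lemma one_add_norm_le_mul_one_add_norm_sub (g h : G) :
    1 + ‖h‖ ≤ (1 + ‖g‖) * (1 + ‖h - g‖) := by
  have htri : ‖h‖ ≤ ‖h - g‖ + ‖g‖ := by simpa only [sub_add_cancel] using norm_add_le (h - g) g
  have hprod : 0 ≤ ‖g‖ * ‖h - g‖ := by positivity
  linarith

lemma one_add_norm_rpow_mul_one_add_norm_sub_rpow_le {d a b : ℝ} (hd : 0 ≤ d) (ha : 0 ≤ a)
    (hb : 0 ≤ b) (g h : G) :
    (1 + ‖g‖) ^ (-(d + a)) * (1 + ‖h - g‖) ^ (-(d + b)) ≤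
      (1 + ‖h‖) ^ (-d) * ((1 + ‖g‖) ^ (-(a + b)) + (1 + ‖h - g‖) ^ (-(a + b))) := by
  have hx : 0 < 1 + ‖g‖ := by positivity
  have hy : 0 < 1 + ‖h - g‖ := by positivity
  have hdecay : ((1 + ‖g‖) * (1 + ‖h - g‖)) ^ (-d) ≤ (1 + ‖h‖) ^ (-d) :=
    rpow_le_rpow_of_nonpos (by positivity) (one_add_norm_le_mul_one_add_norm_sub g h)
      (neg_nonpos.2 hd)
  calc (1 + ‖g‖) ^ (-(d + a)) * (1 + ‖h - g‖) ^ (-(d + b))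
      = ((1 + ‖g‖) * (1 + ‖h - g‖)) ^ (-d) * ((1 + ‖g‖) ^ (-a) * (1 + ‖h - g‖) ^ (-b)) := by
        rw [mul_rpow hx.le hy.le, neg_add, neg_add, rpow_add hx, rpow_add hy]
        ring
    _ ≤ _ := by
        gcongr
        exact rpow_neg_mul_rpow_neg_le_add hx hy ha hb

lemma norm_tsum_mul_sub_le {R : Type*} [NonUnitalSeminormedRing R] {u v : G → R}
    {C₁ C₂ d a b : ℝ} (hd : 0 ≤ d) (ha : 0 ≤ a) (hb : 0 ≤ b)
    (hsum : Summable fun g : G ↦ (1 + ‖g‖) ^ (-(a + b)))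
    (hu : ∀ g, ‖u g‖ ≤ C₁ * (1 + ‖g‖) ^ (-(d + a)))
    (hv : ∀ g, ‖v g‖ ≤ C₂ * (1 + ‖g‖) ^ (-(d + b))) (h : G) :
    ‖∑' g, u g * v (h - g)‖ ≤
      C₁ * C₂ * (2 * ∑' g : G, (1 + ‖g‖) ^ (-(a + b))) * (1 + ‖h‖) ^ (-d) := by
  have hC₁ : 0 ≤ C₁ := nonneg_of_mul_nonneg_left ((norm_nonneg _).trans (hu 0)) (by positivity)
  have hC₂ : 0 ≤ C₂ := nonneg_of_mul_nonneg_left ((norm_nonneg _).trans (hv 0)) (by positivity)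
  have hreflect : HasSum (fun g : G ↦ (1 + ‖h - g‖) ^ (-(a + b)))
      (∑' g : G, (1 + ‖g‖) ^ (-(a + b))) :=
    (Equiv.subLeft h).hasSum_iff.2 hsum.hasSum
  have hmajorant := (hsum.hasSum.add hreflect).mul_left (C₁ * C₂ * (1 + ‖h‖) ^ (-d))
  have hle (g : G) : ‖u g * v (h - g)‖ ≤ C₁ * C₂ * (1 + ‖h‖) ^ (-d) *
      ((1 + ‖g‖) ^ (-(a + b)) + (1 + ‖h - g‖) ^ (-(a + b))) :=
    calc ‖u g * v (h - g)‖
        ≤ ‖u g‖ * ‖v (h - g)‖ := norm_mul_le _ _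
      _ ≤ C₁ * (1 + ‖g‖) ^ (-(d + a)) * (C₂ * (1 + ‖h - g‖) ^ (-(d + b))) := by
        gcongr
        exacts [hu g, hv (h - g)]
      _ = C₁ * C₂ * ((1 + ‖g‖) ^ (-(d + a)) * (1 + ‖h - g‖) ^ (-(d + b))) := by ring
      _ ≤ C₁ * C₂ * ((1 + ‖h‖) ^ (-d) *
          ((1 + ‖g‖) ^ (-(a + b)) + (1 + ‖h - g‖) ^ (-(a + b)))) := by
        gcongr C₁ * C₂ * ?_
        exact one_add_norm_rpow_mul_one_add_norm_sub_rpow_le hd ha hb g h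
      _ = _ := by ring
  exact (tsum_of_norm_bounded hmajorant hle).trans_eq (by ring)

end Convolution

lemma summable_one_add_norm_int_rpow {s : ℝ} (hs : 1 < s) :
    Summable fun k : ℤ ↦ (1 + ‖k‖) ^ (-s) := by
  refine (summable_abs_int_rpow hs).of_norm_bounded_eventually ?_
  filter_upwards [(Set.finite_singleton (0 : ℤ)).compl_mem_cofinite] with k hk
  have hk' : 0 < |(k : ℝ)| := abs_pos.2 (Int.cast_ne_zero.2 hk)
  rw [norm_of_nonneg (by positivity), Int.norm_eq_abs]
  exact rpow_le_rpow_of_nonpos hk' (by linarith) (by linarith)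

lemma tendsto_one_add_norm_rpow_neg_cobounded {E : Type*} [SeminormedAddGroup E] {d : ℝ}
    (hd : 0 < d) : Tendsto (fun x : E ↦ (1 + ‖x‖) ^ (-d)) (Bornology.cobounded E) (𝓝 0) :=
  (tendsto_rpow_neg_atTop hd).comp
    (tendsto_atTop_add_const_left _ 1 tendsto_norm_cobounded_atTop)

lemma sum_Icc_neg_natCast_eq_add_sum_range {M : Type*} [AddCommMonoid M] (f : ℤ → M) (n : ℕ) :
    ∑ k ∈ Finset.Icc (-(n : ℤ)) n, f k =
      f 0 + ∑ i ∈ Finset.range n, (f (i + 1) + f (-(i + 1))) := by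
  induction n with
  | zero => simp
  | succ n ih =>
    rw [Nat.cast_succ, Finset.Icc_succ_succ, Finset.sum_union (by simp),
      Finset.sum_pair (by lia), ih, Finset.sum_range_succ, add_assoc, add_comm (f (-_))]

lemma tendsto_inv_smul_sum_Icc_neg {E : Type*} [NormedAddCommGroup E] [NormedSpace ℝ E]
    {f : ℤ → E} {l l' : E} (htop : Tendsto f atTop (𝓝 l)) (hbot : Tendsto f atBot (𝓝 l')) :
    Tendsto (fun n : ℕ ↦ (n : ℝ)⁻¹ • ∑ k ∈ Finset.Icc (-(n : ℤ)) n, f k) atTop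
      (𝓝 (l + l')) := by
  have hsucc : Tendsto (fun i : ℕ ↦ (i : ℤ) + 1) atTop atTop :=
    tendsto_atTop_add_const_right _ 1 tendsto_natCast_atTop_atTop
  have hpairs := ((htop.comp hsucc).add
    (hbot.comp (tendsto_neg_atTop_atBot.comp hsucc))).cesaro_smul
  have hzero : Tendsto (fun n : ℕ ↦ (n : ℝ)⁻¹ • f 0) atTop (𝓝 0) := by
    simpa only [zero_smul] using
      (tendsto_inv_atTop_nhds_zero_nat (𝕜 := ℝ)).smul_const (f 0)
  simpa only [sum_Icc_neg_natCast_eq_add_sum_range, smul_add, zero_add] using! hzero.add hpairs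

lemma exists_pos_add_eq_add_eq {α β s : ℝ} (hα : 0 < α) (hβ : 0 < β) (hs : s < α + β) :
    ∃ d a b : ℝ, 0 < d ∧ 0 ≤ a ∧ 0 ≤ b ∧ s < a + b ∧ d + a = α ∧ d + b = β := by
  obtain ⟨d, hd, hdlt⟩ : ∃ d, 0 < d ∧ d < min (min α β) ((α + β - s) / 2) :=
    exists_between (lt_min (lt_min hα hβ) (by linarith))
  obtain ⟨⟨hdα, hdβ⟩, hds⟩ : (d < α ∧ d < β) ∧ d < (α + β - s) / 2 := by
    simpa only [lt_min_iff] using hdlt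
  exact ⟨d, α - d, β - d, hd, by linarith, by linarith, by linarith, by ring, by ring⟩

lemma abs_ite_zero_le {x : ℝ} (hx : 0 ≤ x) {p : Prop} [Decidable p] :
    |if p then x else 0| ≤ x := by
  split_ifs
  · exact (abs_of_nonneg hx).le
  · rwa [abs_zero]

theorem stmt18_general {H1 H2 C1 C2 : ℝ} (h1 : H1 < 1) (h2 : H2 < 1) (hH : H1 + H2 < 3 / 2)
    {γ1 γ2 : ℕ → ℤ → ℝ}
    (hγ1 : ∀ (n : ℕ) (k : ℤ), |γ1 n k| ≤ C1 * (1 + |(k : ℝ)|) ^ (2 * H1 - 2))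
    (hγ2 : ∀ (n : ℕ) (k : ℤ), |γ2 n k| ≤ C2 * (1 + |(k : ℝ)|) ^ (2 * H2 - 2)) :
    Tendsto (fun n : ℕ ↦
        (1 / (n : ℝ)) *
          ∑ k ∈ Finset.Icc (-(n : ℤ)) (n : ℤ), (∑' j : ℤ, γ1 n j * γ2 n (k - j)) ^ 2)
      atTop (𝓝 0) := by
  obtain ⟨d, a, b, hd, ha, hb, hab, hda, hdb⟩ :=
    exists_pos_add_eq_add_eq (α := 2 - 2 * H1) (β := 2 - 2 * H2) (s := 1)
      (by linarith) (by linarith) (by linarith)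
  simp only [← neg_sub (2 : ℝ), ← hda] at hγ1
  simp only [← neg_sub (2 : ℝ), ← hdb] at hγ2
  obtain ⟨C, hconv⟩ : ∃ C : ℝ, ∀ (n : ℕ) (k : ℤ),
      |∑' j : ℤ, γ1 n j * γ2 n (k - j)| ≤ C * (1 + ‖k‖) ^ (-d) :=
    ⟨_, fun n k ↦ norm_tsum_mul_sub_le (u := γ1 n) (v := γ2 n) hd.le ha hb
      (summable_one_add_norm_int_rpow hab) (hγ1 n) (hγ2 n) k⟩
  have hdecay : Tendsto (fun k : ℤ ↦ (C * (1 + ‖k‖) ^ (-d)) ^ 2) (atBot ⊔ atTop) (𝓝 0) := by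
    simpa [IsOrderBornology.cobounded_eq] using
      ((tendsto_one_add_norm_rpow_neg_cobounded (E := ℤ) hd).const_mul C).pow 2
  have hmean := tendsto_inv_smul_sum_Icc_neg (hdecay.mono_left le_sup_right)
    (hdecay.mono_left le_sup_left)
  rw [add_zero] at hmean
  refine squeeze_zero (fun n ↦ by positivity) (fun n ↦ ?_) hmean
  rw [one_div, smul_eq_mul]
  gcongr _ * ∑ k ∈ _, ?_ with k
  exact sq_le_sq' (abs_le.1 (hconv n k)).1 (abs_le.1 (hconv n k)).2

/-- Convolution-square estimate: for `H₁, H₂ ∈ (0,1)` with `H₁ + H₂ < 3/2`,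
with `γᵢⁿ(k) = (1+|k|)^{2Hᵢ-2} 𝟙_{|k|<n}`, the normalized sum of squared
convolutions `(1/n) ∑_{k=-n}^{n} (γ₁ⁿ * γ₂ⁿ (k))² → 0`. -/
theorem stmt18
    (H1 H2 : ℝ) (h1 : H1 ∈ Set.Ioo (0:ℝ) 1) (h2 : H2 ∈ Set.Ioo (0:ℝ) 1)
    (hH : H1 + H2 < 3 / 2)
    (γ1 γ2 : ℕ → ℤ → ℝ)
    (hγ1 : ∀ (n : ℕ) (k : ℤ),
      γ1 n k = if |k| < (n : ℤ) then (1 + |(k : ℝ)|) ^ (2 * H1 - 2) else 0)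
    (hγ2 : ∀ (n : ℕ) (k : ℤ),
      γ2 n k = if |k| < (n : ℤ) then (1 + |(k : ℝ)|) ^ (2 * H2 - 2) else 0) :
    Tendsto (fun n : ℕ =>
        (1 / (n : ℝ)) *
          ∑ k ∈ Finset.Icc (-(n : ℤ)) (n : ℤ),
            (∑' j : ℤ, γ1 n j * γ2 n (k - j)) ^ 2)
      atTop (𝓝 0) :=
  stmt18_general (C1 := 1) (C2 := 1) h1.2 h2.2 hH
    (fun n k ↦ by rw [hγ1, one_mul]; exact abs_ite_zero_le (by positivity))
    (fun n k ↦ by rw [hγ2, one_mul]; exact abs_ite_zero_le (by positivity))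
end
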